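/- For all nonnegative integers a and b there exists a family (P_e) of positive rational numbers, indexed by the covering edges e of L6(a,b), with the following property: let V be the complex vector space with basis {v_t : t ∈ L6(a,b)} and, for each node i of the E6 Dynkin diagram, define linear operators on V by X_i v_r := Σ √(P_e)·v_s (sum over color-i edges e: r ⋖ s out of r), Y_i v_s := Σ √(P_e)·v_r (sum over color-i edges e: r ⋖ s into s), and H_i v_t := m_i(t)·v_t; then there is a Lie algebra homomorphism φ : 𝔤(E6) → End(V) with φ(x_i) = X_i, φ(y_i) = Y_i, φ(h_i) = H_i for every node i. Moreover, for any such family and homomorphism, the resulting 𝔤(E6)-module V is irreducible (its only 𝔤(E6)-invariant subspaces are 0 and V) and has highest weight aω_{1'} + bω_{6'}: the vector v_{t_max} indexed by the maximal element t_max of L6(a,b) satisfies X_i v_{t_max} = 0 for every node i, H_{1'} v_{t_max} = a·v_{t_max}, H_{6'} v_{t_max} = b·v_{t_max}, and H_j v_{t_max} = 0 for every other node j. -/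

import Mathlib

/-!
Adjoin to `P24` three elements of a new colour `none`, adjacent to `m1` in the Dynkin diagram: the
result is the 27-element minuscule heap of type `E₇`, and the elements of `L6(a,b)` are its
order-reversing labellings with the fixed values `a + b`, `a` and `0` on the new elements. In this
heap the elements of each colour `i ≠ none` interlace with those of the adjacent colours, exactly
as the rows of a Gelfand–Tsetlin pattern do, and the coefficients are the Gelfand–Tsetlin
coefficients: at an element `x` of colour `i`, products over the adjacent colours divided by
products over the other elements of colour `i`. The relation `[x_i, y_i] = h_i` is then a Lagrange
interpolation identity on the nodes `ℓ(x) ± 1/2`, the relation `[x_i, y_j] = 0` holds since in each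
diamond of the lattice the two upper and the two lower edges have the same product of coefficients,
and in finite dimension the Serre relations on iterated brackets follow from the others.

Irreducibility holds for arbitrary positive coefficients: by the shape of the lattice, a vector
killed by all raising operators is a multiple of the top basis vector, and the lowering operators
are the transposes of the raising operators.
-/

noncomputable section

namespace CL

variable {N : Type} [DecidableEq N] [Fintype N]

/-- One-step relation generating the partial order on the poset of positions. -/
def step (adj : N → N → Prop) (pos : Finset (N × ℕ)) (x y : N × ℕ) : Prop :=
  x ∈ pos ∧ y ∈ pos ∧ adj x.1 y.1 ∧ y.2 = x.2 + 1

/-- The partial order on positions, generated by `step`. -/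
def ple (adj : N → N → Prop) (pos : Finset (N × ℕ)) : N × ℕ → N × ℕ → Prop :=
  Relation.ReflTransGen (step adj pos)

/-- The lattice of `ℕ`-labellings of the positions which are bounded by `k`, order-reversing,
and satisfy a further constraint `extra`. -/
def Elt (adj : N → N → Prop) (pos : Finset (N × ℕ)) (k : ℕ)
    (extra : ({x : N × ℕ // x ∈ pos} → ℕ) → Prop) : Type :=
  {c : {x : N × ℕ // x ∈ pos} → ℕ //
    (∀ x, c x ≤ k) ∧ (∀ x y, ple adj pos y.1 x.1 → c x ≤ c y) ∧ extra c}

variable {adj : N → N → Prop} {pos : Finset (N × ℕ)} {k : ℕ}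
  {extra : ({x : N × ℕ // x ∈ pos} → ℕ) → Prop}

instance : Finite (Elt adj pos k extra) := by
  apply Finite.of_injective
    (fun c : Elt adj pos k extra =>
      fun x => (⟨c.1 x, Nat.lt_succ_of_le (c.2.1 x)⟩ : Fin (k + 1)))
  intro c d h
  apply Subtype.ext
  funext x
  exact congrArg Fin.val (congrFun h x)

instance : Fintype (Elt adj pos k extra) := Fintype.ofFinite _

instance : DecidableEq (Elt adj pos k extra) := by unfold Elt; infer_instance

/-- Componentwise comparison of labellings. -/
def elLe (r s : Elt adj pos k extra) : Prop := ∀ x, r.1 x ≤ s.1 x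

/-- The covering edge of color `i`: exactly one entry, at a position of color `i`,
is increased by one. -/
def edge (i : N) (r s : Elt adj pos k extra) : Prop :=
  ∃ x : {x : N × ℕ // x ∈ pos}, x.1.1 = i ∧ s.1 x = r.1 x + 1 ∧
    ∀ y, y ≠ x → s.1 y = r.1 y

instance (i : N) (r s : Elt adj pos k extra) : Decidable (edge i r s) := by
  unfold edge; infer_instance

/-- The rank function: the sum of all entries. -/
def rk (t : Elt adj pos k extra) : ℕ := ∑ x ∈ pos.attach, t.1 x

/-- The connected component of `t` in the graph of color-`i` covering edges. -/
def comp (i : N) (t : Elt adj pos k extra) : Set (Elt adj pos k extra) :=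
  {s | Relation.ReflTransGen (fun a b => edge i a b ∨ edge i b a) t s}

/-- The integer `m_i(t) = (ρ(t) − min ρ on comp_i(t)) − (max ρ on comp_i(t) − ρ(t))`. -/
def mwt (i : N) (t : Elt adj pos k extra) : ℤ :=
  ((rk t : ℤ) - ((sInf (rk '' comp i t) : ℕ) : ℤ)) -
    (((sSup (rk '' comp i t) : ℕ) : ℤ) - (rk t : ℤ))

end CL

namespace CL

/-- Generators `x_i, y_i, h_i` for the Serre presentation. -/
inductive SGen (I : Type) : Type
  | X : I → SGen I
  | Y : I → SGen I
  | H : I → SGen I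

variable {I : Type}

/-- The generator `x_i` in the free Lie algebra. -/
def gx (i : I) : FreeLieAlgebra ℂ (SGen I) := FreeLieAlgebra.of ℂ (SGen.X i)

/-- The generator `y_i` in the free Lie algebra. -/
def gy (i : I) : FreeLieAlgebra ℂ (SGen I) := FreeLieAlgebra.of ℂ (SGen.Y i)

/-- The generator `h_i` in the free Lie algebra. -/
def gh (i : I) : FreeLieAlgebra ℂ (SGen I) := FreeLieAlgebra.of ℂ (SGen.H i)

/-- The Serre relations determined by the matrix `A`:
`[h_i,h_j] = 0`; `[x_i,y_i] = h_i` and `[x_i,y_j] = 0` for `i ≠ j`;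
`[h_i,x_j] = A_{j,i}·x_j`; `[h_i,y_j] = −A_{j,i}·y_j`; and
`ad(x_i)^{1−A_{j,i}}(x_j) = 0 = ad(y_i)^{1−A_{j,i}}(y_j)` for `i ≠ j`. -/
def serreSet (A : I → I → ℤ) : Set (FreeLieAlgebra ℂ (SGen I)) :=
  {z | ∃ i j : I, z = ⁅gh i, gh j⁆} ∪
  {z | ∃ i : I, z = ⁅gx i, gy i⁆ - gh i} ∪
  {z | ∃ i j : I, i ≠ j ∧ z = ⁅gx i, gy j⁆} ∪
  {z | ∃ i j : I, z = ⁅gh i, gx j⁆ - (A j i) • gx j} ∪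
  {z | ∃ i j : I, z = ⁅gh i, gy j⁆ + (A j i) • gy j} ∪
  {z | ∃ i j : I, i ≠ j ∧
    z = ((LieAlgebra.ad ℂ (FreeLieAlgebra ℂ (SGen I)) (gx i)) ^ (1 - A j i).toNat) (gx j)} ∪
  {z | ∃ i j : I, i ≠ j ∧
    z = ((LieAlgebra.ad ℂ (FreeLieAlgebra ℂ (SGen I)) (gy i)) ^ (1 - A j i).toNat) (gy j)}

/-- The Lie ideal generated by the Serre relations. -/
def serreIdeal (A : I → I → ℤ) : LieIdeal ℂ (FreeLieAlgebra ℂ (SGen I)) :=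
  LieSubmodule.lieSpan ℂ _ (serreSet A)

/-- The Lie algebra `𝔤(A)` presented by generators `x_i, y_i, h_i` subject to
the Serre relations determined by `A`. -/
abbrev gLie (A : I → I → ℤ) : Type := FreeLieAlgebra ℂ (SGen I) ⧸ serreIdeal A

/-- The image of `x_i` in `𝔤(A)`. -/
def px (A : I → I → ℤ) (i : I) : gLie A := LieSubmodule.Quotient.mk (N := serreIdeal A) (gx i)

/-- The image of `y_i` in `𝔤(A)`. -/
def py (A : I → I → ℤ) (i : I) : gLie A := LieSubmodule.Quotient.mk (N := serreIdeal A) (gy i)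

/-- The image of `h_i` in `𝔤(A)`. -/
def ph (A : I → I → ℤ) (i : I) : gLie A := LieSubmodule.Quotient.mk (N := serreIdeal A) (gh i)

end CL

namespace CL

variable {N : Type} [DecidableEq N] [Fintype N]
variable {adj : N → N → Prop} {pos : Finset (N × ℕ)} {k : ℕ}
  {extra : ({x : N × ℕ // x ∈ pos} → ℕ) → Prop}

/-- The raising operator `x_i·`, with coefficient `√(P_e)` on each color-`i` edge `e`. -/
def opX (P : Elt adj pos k extra → Elt adj pos k extra → ℚ) (i : N) :
    Module.End ℂ (Elt adj pos k extra → ℂ) :=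
  Matrix.mulVecLin fun s r => if edge i r s then (↑(Real.sqrt (P r s)) : ℂ) else 0

/-- The lowering operator `y_i·`, with coefficient `√(P_e)` on each color-`i` edge `e`. -/
def opY (P : Elt adj pos k extra → Elt adj pos k extra → ℚ) (i : N) :
    Module.End ℂ (Elt adj pos k extra → ℂ) :=
  Matrix.mulVecLin fun r s => if edge i r s then (↑(Real.sqrt (P r s)) : ℂ) else 0

/-- The diagonal operator `h_i·`, acting on `v_t` by the eigenvalue `m_i(t)`. -/
def opH (i : N) : Module.End ℂ (Elt adj pos k extra → ℂ) :=
  Matrix.mulVecLin (Matrix.diagonal fun t => ((mwt i t : ℤ) : ℂ))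

end CL

/-! ### Type `E₆` data -/

/-- The nodes `1', 2', 3', 4', 5', 6'` of the `E₆` Dynkin diagram. -/
inductive N6 : Type
  | m1 | m2 | m3 | m4 | m5 | m6
  deriving DecidableEq

instance : Fintype N6 where
  elems := ⟨[N6.m1, N6.m2, N6.m3, N6.m4, N6.m5, N6.m6], by decide⟩
  complete := by intro x; cases x <;> decide

open N6

/-- Adjacency in the `E₆` Dynkin diagram: edges `1'-2', 2'-3', 3'-4', 3'-5', 5'-6'`. -/
abbrev adj6 : N6 → N6 → Prop := fun a b =>
  (a, b) ∈ ([(m1, m2), (m2, m3), (m3, m4), (m3, m5), (m5, m6)] : List (N6 × N6)) ∨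
  (b, a) ∈ ([(m1, m2), (m2, m3), (m3, m4), (m3, m5), (m5, m6)] : List (N6 × N6))

/-- The Cartan matrix of type `E₆`, indexed by the nodes. -/
def A6 : N6 → N6 → ℤ := fun i j => if i = j then 2 else if adj6 i j then -1 else 0

/-- The 24 (color, rank) positions of the poset `P24 = 𝒫`. -/
def pos24 : Finset (N6 × ℕ) :=
  {(m1, 0), (m2, 1), (m3, 2), (m4, 3), (m5, 3), (m3, 4), (m6, 4), (m2, 5), (m5, 5),
   (m1, 6), (m3, 6), (m2, 7), (m4, 7), (m1, 8), (m3, 8), (m2, 9), (m5, 9), (m3, 10),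
   (m6, 10), (m4, 11), (m5, 11), (m3, 12), (m2, 13), (m1, 14)}

/-- The 16 (color, rank) positions of the minuscule poset `P16' = P_{E₆}(ω₁')`. -/
def pos16p : Finset (N6 × ℕ) :=
  {(m6, 0), (m5, 1), (m3, 2), (m2, 3), (m4, 3), (m1, 4), (m3, 4), (m2, 5), (m5, 5),
   (m3, 6), (m6, 6), (m4, 7), (m5, 7), (m3, 8), (m2, 9), (m1, 10)}

/-- The 16 (color, rank) positions of the minuscule poset `P16'' = P_{E₆}(ω₆')`. -/
def pos16pp : Finset (N6 × ℕ) :=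
  {(m1, 0), (m2, 1), (m3, 2), (m4, 3), (m5, 3), (m3, 4), (m6, 4), (m2, 5), (m5, 5),
   (m1, 6), (m3, 6), (m2, 7), (m4, 7), (m3, 8), (m5, 9), (m6, 10)}

/-- The extra constraints on elements of `L6(a,b)`: `c((1',8)) ≤ a` and `c((1',6)) ≥ a`. -/
def extra6 (a : ℕ) : ({x : N6 × ℕ // x ∈ pos24} → ℕ) → Prop := fun c =>
  c ⟨(m1, 8), by decide⟩ ≤ a ∧ a ≤ c ⟨(m1, 6), by decide⟩

/-- The lattice `L6(a,b) = L_{E₆}(aω₁' + bω₆')`. -/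
abbrev L6ab (a b : ℕ) : Type := CL.Elt adj6 pos24 (a + b) (extra6 a)

/-- The lattice `L6'(k) = L_{E₆}(kω₁')`. -/
abbrev L6p (k : ℕ) : Type := CL.Elt adj6 pos16p k (fun _ => True)

/-- The lattice `L6''(k) = L_{E₆}(kω₆')`. -/
abbrev L6pp (k : ℕ) : Type := CL.Elt adj6 pos16pp k (fun _ => True)

attribute [local instance 100] LieRing.ofAssociativeRing

/-! ### Lagrange interpolation -/

section Interpolation

variable {ι K : Type*} [DecidableEq ι] [Field K] {S : Finset ι}

theorem sum_prod_sub_div_prod_sub_of_injOn (z q : ι → K) (hz : Set.InjOn z S) :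
    ∑ k ∈ S, (∏ l ∈ S, (z k - q l)) / ∏ j ∈ S.erase k, (z k - z j) =
      ∑ k ∈ S, (z k - q k) := by
  rcases S.eq_empty_or_nonempty with rfl | hS
  · simp only [Finset.sum_empty]
  have degree_eq (w : ι → K) :
      (∏ l ∈ S, (Polynomial.X - Polynomial.C (w l))).degree = (S.card : WithBot ℕ) := by
    rw [Polynomial.degree_eq_natDegree (Polynomial.monic_prod_X_sub_C _ _).ne_zero,
      Polynomial.natDegree_finsetProd_X_sub_C_eq_card]
  set p := ∏ l ∈ S, (Polynomial.X - Polynomial.C (q l)) with hp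
  set r := ∏ l ∈ S, (Polynomial.X - Polynomial.C (z l)) with hr
  have degree_lt : (p - r).degree < S.card := by
    rw [← degree_eq q]
    refine Polynomial.degree_sub_lt_left ((degree_eq q).trans (degree_eq z).symm)
      (Polynomial.monic_prod_X_sub_C _ _).ne_zero ?_
    rw [(Polynomial.monic_prod_X_sub_C _ _).leadingCoeff,
      (Polynomial.monic_prod_X_sub_C _ _).leadingCoeff]
  calc _ = ∑ k ∈ S, (p - r).eval (z k) / ∏ j ∈ S.erase k, (z k - z j) := by
        refine Finset.sum_congr rfl fun k hk => ?_
        have eval_r : r.eval (z k) = 0 := by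
          rw [hr, Polynomial.eval_prod]
          exact Finset.prod_eq_zero hk (by simp)
        rw [Polynomial.eval_sub, eval_r, sub_zero, hp, Polynomial.eval_prod]
        simp only [Polynomial.eval_sub, Polynomial.eval_X, Polynomial.eval_C]
    _ = (p - r).coeff (S.card - 1) := (Lagrange.coeff_eq_sum hz degree_lt).symm
    _ = ∑ k ∈ S, (z k - q k) := by
        rw [Polynomial.coeff_sub, Polynomial.prod_X_sub_C_coeff_card_pred S q hS.card_pos,
          Polynomial.prod_X_sub_C_coeff_card_pred S z hS.card_pos, Finset.sum_sub_distrib]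
        ring

theorem sum_prod_sub_div_prod_sub (z q : ι → K)
    (h : ∀ k ∈ S, ∀ j ∈ S, j ≠ k → z j = z k → q k = z k) :
    ∑ k ∈ S, (∏ l ∈ S, (z k - q l)) / ∏ j ∈ S.erase k, (z k - z j) =
      ∑ k ∈ S, (z k - q k) := by
  classical
  set U := S.filter fun k => q k ≠ z k
  have mem_U {k : ι} (hk : k ∈ U) : k ∈ S ∧ q k ≠ z k := Finset.mem_filter.mp hk
  have eq_of_notMem {k : ι} (hk : k ∈ S) (hkU : k ∉ U) : q k = z k := by
    by_contra hne
    exact hkU (Finset.mem_filter.mpr ⟨hk, hne⟩)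
  have z_ne {k j : ι} (hk : k ∈ U) (hj : j ∈ S) (hjk : j ≠ k) : z j ≠ z k := fun e =>
    (mem_U hk).2 (h k (mem_U hk).1 j hj hjk e)
  have injOn : Set.InjOn z U := fun j hj k hk e => by
    by_contra hne
    exact z_ne hk (mem_U hj).1 hne e
  calc _ = ∑ k ∈ U, (∏ l ∈ S, (z k - q l)) / ∏ j ∈ S.erase k, (z k - z j) := by
        refine (Finset.sum_subset (Finset.filter_subset _ S) fun k hk hkU => ?_).symm
        rw [Finset.prod_eq_zero hk (by rw [eq_of_notMem hk hkU, sub_self]), zero_div]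
    _ = ∑ k ∈ U, (∏ l ∈ U, (z k - q l)) / ∏ j ∈ U.erase k, (z k - z j) := by
        refine Finset.sum_congr rfl fun k hk => ?_
        have cancel : ∏ l ∈ S \ U, (z k - q l) = ∏ l ∈ S \ U, (z k - z l) :=
          Finset.prod_congr rfl fun l hl => by
            rw [eq_of_notMem (Finset.mem_sdiff.mp hl).1 (Finset.mem_sdiff.mp hl).2]
        have ne_zero : ∏ l ∈ S \ U, (z k - z l) ≠ 0 := Finset.prod_ne_zero_iff.mpr fun l hl =>
          sub_ne_zero.mpr (z_ne hk (Finset.mem_sdiff.mp hl).1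
            (ne_of_mem_of_not_mem hk (Finset.mem_sdiff.mp hl).2).symm).symm
        have erase_sdiff : S.erase k \ U.erase k = S \ U := by
          grind
        rw [← Finset.prod_sdiff (Finset.filter_subset _ S : U ⊆ S), cancel,
          ← Finset.prod_sdiff (Finset.erase_subset_erase k (Finset.filter_subset _ S : U ⊆ S)),
          erase_sdiff, mul_div_mul_left _ _ ne_zero]
    _ = ∑ k ∈ U, (z k - q k) := sum_prod_sub_div_prod_sub_of_injOn z q injOn
    _ = ∑ k ∈ S, (z k - q k) :=
        Finset.sum_subset (Finset.filter_subset _ S) fun k hk hkU => by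
          rw [eq_of_notMem hk hkU, sub_self]

end Interpolation

/-! ### Representations of `𝔤(A)` -/

namespace CL

section Serre

theorem toEnd_pow_succ_eq_zero_of_lie_eq_zero {K L M : Type*} [Field K] [CharZero K]
    [LieRing L] [LieAlgebra K L] [AddCommGroup M] [Module K M] [LieRingModule L M]
    [LieModule K L M] [FiniteDimensional K M] {h e f : L} (hef : ⁅e, f⁆ = h)
    (hhe : ⁅h, e⁆ = (2 : K) • e) (hhf : ⁅h, f⁆ = -((2 : K) • f)) {m : M} {n : ℕ}
    (hem : ⁅e, m⁆ = 0) (hhm : ⁅h, m⁆ = (n : K) • m) :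
    (LieModule.toEnd K L M f ^ (n + 1)) m = 0 := by
  rcases eq_or_ne m 0 with rfl | hm
  · exact map_zero _
  rcases eq_or_ne h 0 with rfl | hh
  · have f_eq_zero : f = 0 := by
      rw [zero_lie, zero_eq_neg] at hhf
      exact (smul_eq_zero_iff_right two_ne_zero).mp hhf
    rw [f_eq_zero, map_zero, zero_pow n.succ_ne_zero, LinearMap.zero_apply]
  · have triple : IsSl2Triple h e f :=
      ⟨hh, hef, by rw [hhe, two_smul, two_nsmul], by rw [hhf, two_smul, two_nsmul]⟩
    have primitive : triple.HasPrimitiveVectorWith m (n : K) := ⟨hm, hhm, hem⟩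
    exact primitive.pow_toEnd_f_eq_zero_of_eq_nat rfl

variable {I L : Type} [LieRing L] [LieAlgebra ℂ L] {A : I → I → ℤ} {x y h : I → L}

theorem lieHom_ad_pow_apply {K L₁ L₂ : Type*} [CommRing K] [LieRing L₁] [LieAlgebra K L₁]
    [LieRing L₂] [LieAlgebra K L₂] (F : L₁ →ₗ⁅K⁆ L₂) (u v : L₁) (n : ℕ) :
    F ((LieAlgebra.ad K L₁ u ^ n) v) = (LieAlgebra.ad K L₂ (F u) ^ n) (F v) := by
  induction n with
  | zero => simp only [pow_zero, Module.End.one_apply]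
  | succ n ih =>
    rw [pow_succ', pow_succ', Module.End.mul_apply, Module.End.mul_apply, LieAlgebra.ad_apply,
      LieHom.map_lie, ih, LieAlgebra.ad_apply]

theorem exists_lieHom_quotient {K L₁ L₂ : Type*} [CommRing K] [LieRing L₁] [LieAlgebra K L₁]
    [LieRing L₂] [LieAlgebra K L₂] {J : LieIdeal K L₁} (F : L₁ →ₗ⁅K⁆ L₂) (hJ : J ≤ F.ker) :
    ∃ φ : L₁ ⧸ J →ₗ⁅K⁆ L₂, ∀ u, φ (LieSubmodule.Quotient.mk u) = F u := by
  let G : L₁ ⧸ J →ₗ[K] L₂ :=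
    J.toSubmodule.liftQ (F : L₁ →ₗ[K] L₂) fun _ hu => LieHom.mem_ker.mp (hJ hu)
  refine ⟨{ G with map_lie' := ?_ }, fun _ => rfl⟩
  intro u v
  obtain ⟨u, rfl⟩ := LieSubmodule.Quotient.surjective_mk' J u
  obtain ⟨v, rfl⟩ := LieSubmodule.Quotient.surjective_mk' J v
  exact LieHom.map_lie F u v

/-- The defining relations of `𝔤(A)` other than the nilpotency ones, for a triple of families. -/
structure IsCartanTriple (A : I → I → ℤ) (x y h : I → L) : Prop where
  lie_h_h : ∀ i j, ⁅h i, h j⁆ = 0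
  lie_x_y : ∀ i, ⁅x i, y i⁆ = h i
  lie_x_y_of_ne : ∀ i j, i ≠ j → ⁅x i, y j⁆ = 0
  lie_h_x : ∀ i j, ⁅h i, x j⁆ = A j i • x j
  lie_h_y : ∀ i j, ⁅h i, y j⁆ = -(A j i • y j)

namespace IsCartanTriple

variable [FiniteDimensional ℂ L]

omit [LieAlgebra ℂ L] [FiniteDimensional ℂ L] in
theorem symm (hxyh : IsCartanTriple A x y h) : IsCartanTriple A y x fun i => -h i where
  lie_h_h i j := by rw [neg_lie, lie_neg, neg_neg, hxyh.lie_h_h]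
  lie_x_y i := by rw [← lie_skew, hxyh.lie_x_y]
  lie_x_y_of_ne i j hij := by rw [← lie_skew, hxyh.lie_x_y_of_ne j i hij.symm, neg_zero]
  lie_h_x i j := by rw [neg_lie, hxyh.lie_h_y, neg_neg]
  lie_h_y i j := by rw [neg_lie, hxyh.lie_h_x]

theorem ad_pow_x_eq_zero (hxyh : IsCartanTriple A x y h) (hdiag : ∀ i, A i i = 2)
    {i j : I} (hij : i ≠ j) (hA : A j i ≤ 0) :
    (LieAlgebra.ad ℂ L (x i) ^ (1 - A j i).toNat) (x j) = 0 := by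
  obtain ⟨n, hn⟩ := Int.eq_ofNat_of_zero_le (neg_nonneg.mpr hA)
  have exponent_eq : (1 - A j i).toNat = n + 1 := by lia
  rw [exponent_eq]
  refine toEnd_pow_succ_eq_zero_of_lie_eq_zero (h := -h i) (e := y i) ?_ ?_ ?_ ?_ ?_
  · rw [← lie_skew, hxyh.lie_x_y]
  · rw [hxyh.symm.lie_h_x, hdiag, ofNat_zsmul]; norm_cast
  · rw [hxyh.symm.lie_h_y, hdiag, ofNat_zsmul]; norm_cast
  · exact hxyh.symm.lie_x_y_of_ne i j hij
  · rw [neg_lie, hxyh.lie_h_x, ← neg_smul, hn, natCast_zsmul, Nat.cast_smul_eq_nsmul]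

theorem exists_lieHom (hxyh : IsCartanTriple A x y h) (hdiag : ∀ i, A i i = 2)
    (hoff : ∀ i j, i ≠ j → A i j ≤ 0) :
    ∃ φ : gLie A →ₗ⁅ℂ⁆ L, ∀ i, φ (px A i) = x i ∧ φ (py A i) = y i ∧ φ (ph A i) = h i := by
  let f : SGen I → L := SGen.rec x y h
  let F : FreeLieAlgebra ℂ (SGen I) →ₗ⁅ℂ⁆ L := FreeLieAlgebra.lift ℂ f
  have F_x (i : I) : F (gx i) = x i := FreeLieAlgebra.lift_of_apply f (.X i)
  have F_y (i : I) : F (gy i) = y i := FreeLieAlgebra.lift_of_apply f (.Y i)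
  have F_h (i : I) : F (gh i) = h i := FreeLieAlgebra.lift_of_apply f (.H i)
  suffices serreIdeal A ≤ F.ker by
    obtain ⟨φ, hφ⟩ := exists_lieHom_quotient F this
    exact ⟨φ, fun i => ⟨(hφ (gx i)).trans (F_x i), (hφ (gy i)).trans (F_y i),
      (hφ (gh i)).trans (F_h i)⟩⟩
  rw [serreIdeal, LieSubmodule.lieSpan_le]
  intro z hz
  rw [SetLike.mem_coe, LieHom.mem_ker]
  rcases hz with (((((⟨i, j, rfl⟩ | ⟨i, rfl⟩) | ⟨i, j, hij, rfl⟩) | ⟨i, j, rfl⟩) | ⟨i, j, rfl⟩)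
    | ⟨i, j, hij, rfl⟩) | ⟨i, j, hij, rfl⟩
  · rw [LieHom.map_lie, F_h, F_h, hxyh.lie_h_h]
  · rw [map_sub, LieHom.map_lie, F_x, F_y, F_h, hxyh.lie_x_y, sub_self]
  · rw [LieHom.map_lie, F_x, F_y, hxyh.lie_x_y_of_ne i j hij]
  · rw [map_sub, LieHom.map_lie, map_zsmul, F_h, F_x, hxyh.lie_h_x, sub_self]
  · rw [map_add, LieHom.map_lie, map_zsmul, F_h, F_y, hxyh.lie_h_y, neg_add_cancel]
  · rw [lieHom_ad_pow_apply, F_x, F_x, hxyh.ad_pow_x_eq_zero hdiag hij (hoff j i hij.symm)]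
  · rw [lieHom_ad_pow_apply, F_y, F_y, hxyh.symm.ad_pow_x_eq_zero hdiag hij (hoff j i hij.symm)]

end IsCartanTriple

end Serre

end CL

/-! ### Operators on labellings -/

namespace CL

section Diagonal

variable {T : Type*} [Fintype T]

theorem lie_mulVecLin (M M' : Matrix T T ℂ) :
    ⁅M.mulVecLin, M'.mulVecLin⁆ = (M * M' - M' * M).mulVecLin := by
  refine LinearMap.ext fun v => ?_
  simp only [Ring.lie_def, LinearMap.sub_apply, Module.End.mul_apply, Matrix.mulVecLin_apply,
    Matrix.mulVec_mulVec, Matrix.sub_mulVec]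

variable [DecidableEq T] {M : Matrix T T ℂ} {d : T → ℂ} {c : ℂ}

theorem lie_diagonal_mulVecLin (hd : ∀ s r, M s r ≠ 0 → d s = d r + c) :
    ⁅(Matrix.diagonal d).mulVecLin, M.mulVecLin⁆ = c • M.mulVecLin := by
  have entries : Matrix.diagonal d * M - M * Matrix.diagonal d = c • M := by
    ext s r
    rw [Matrix.sub_apply, Matrix.diagonal_mul, Matrix.mul_diagonal, Matrix.smul_apply, smul_eq_mul]
    by_cases hsr : M s r = 0
    · rw [hsr]; ring
    · rw [hd s r hsr]; ring
  rw [lie_mulVecLin, entries]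
  exact LinearMap.ext fun v => Matrix.smul_mulVec c M v

theorem reflTransGen_of_pow_mulVecLin_apply_ne_zero {R : T → T → Prop}
    (hR : ∀ s r, M s r ≠ 0 → R r s) {t : T} (n : ℕ) :
    ∀ s, (M.mulVecLin ^ n) (Pi.single t 1) s ≠ 0 → Relation.ReflTransGen R t s := by
  induction n with
  | zero =>
    intro s hs
    have : s = t := by
      by_contra hst
      exact hs (Pi.single_eq_of_ne hst 1)
    rw [this]
  | succ n ih =>
    intro s hs
    rw [pow_succ', Module.End.mul_apply, Matrix.mulVecLin_apply, Matrix.mulVec, dotProduct] at hs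
    obtain ⟨r, -, hr⟩ := Finset.exists_ne_zero_of_sum_ne_zero hs
    exact (ih r (right_ne_zero_of_mul hr)).tail (hR s r (left_ne_zero_of_mul hr))

/-- In a finite-dimensional `𝔰𝔩₂`-module the weight opposite to that of a highest weight vector
occurs among the vectors obtained from it by lowering. -/
theorem exists_reflTransGen_eq_neg {M' : Matrix T T ℂ} {w : T → ℤ} {R : T → T → Prop}
    (hlie : ⁅M.mulVecLin, M'.mulVecLin⁆ = (Matrix.diagonal fun t => (w t : ℂ)).mulVecLin)
    (hM : ∀ s r, M s r ≠ 0 → w s = w r + 2) (hM' : ∀ s r, M' s r ≠ 0 → w s = w r - 2)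
    (hR : ∀ s r, M' s r ≠ 0 → R r s) {t : T} (ht : M.mulVecLin (Pi.single t 1) = 0) :
    ∃ s, Relation.ReflTransGen R t s ∧ w s = -w t := by
  set h := (Matrix.diagonal fun t => (w t : ℂ)).mulVecLin with h_def
  have h_apply (v : T → ℂ) (s : T) : h v s = w s * v s := by
    rw [h_def, Matrix.mulVecLin_apply, Matrix.mulVec_diagonal]
  have h_single : h (Pi.single t 1) = (w t : ℂ) • Pi.single t 1 := by
    funext s
    rcases eq_or_ne s t with rfl | hst
    · rw [h_apply, Pi.smul_apply, smul_eq_mul]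
    · rw [h_apply, Pi.smul_apply, Pi.single_eq_of_ne hst, mul_zero, smul_zero]
  have single_ne_zero : (Pi.single t 1 : T → ℂ) ≠ 0 := Pi.single_ne_zero_iff.mpr one_ne_zero
  by_cases hh : h = 0
  · rw [hh, LinearMap.zero_apply, eq_comm, smul_eq_zero_iff_left single_ne_zero,
      Int.cast_eq_zero] at h_single
    exact ⟨t, .refl, by rw [h_single, neg_zero]⟩
  have triple : IsSl2Triple h M.mulVecLin M'.mulVecLin := by
    refine ⟨hh, hlie, ?_, ?_⟩
    · rw [h_def, lie_diagonal_mulVecLin (c := 2) fun s r hsr => by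
        rw [hM s r hsr]; push_cast; ring, two_smul, two_nsmul]
    · rw [h_def, lie_diagonal_mulVecLin (c := -2) fun s r hsr => by
        rw [hM' s r hsr]; push_cast; ring]
      module
  have primitive : triple.HasPrimitiveVectorWith (Pi.single t 1 : T → ℂ) (w t : ℂ) :=
    ⟨single_ne_zero, h_single, ht⟩
  obtain ⟨n, hn⟩ := primitive.exists_nat
  obtain ⟨s, hs⟩ := Function.ne_iff.mp (primitive.pow_toEnd_f_ne_zero_of_eq_nat hn le_rfl)
  refine ⟨s, reflTransGen_of_pow_mulVecLin_apply_ne_zero hR n s hs, ?_⟩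
  have weight_eq := congrFun (primitive.lie_h_pow_toEnd_f n) s
  rw [hn] at weight_eq
  have : (w s : ℂ) = n - 2 * n :=
    mul_right_cancel₀ hs ((h_apply _ s).symm.trans weight_eq)
  have w_t : w t = n := by exact_mod_cast hn
  have w_s : w s = n - 2 * n := by exact_mod_cast this
  lia

end Diagonal

variable {N : Type} {adj : N → N → Prop} {pos : Finset (N × ℕ)} {k : ℕ}
  {extra : ({x : N × ℕ // x ∈ pos} → ℕ) → Prop} {i : N} {r s t : Elt adj pos k extra}
  {P : Elt adj pos k extra → Elt adj pos k extra → ℚ}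

theorem rk_of_edge (h : edge i r s) : rk s = rk r + 1 := by
  classical
  obtain ⟨x, -, hx, hne⟩ := h
  rw [rk, rk, ← Finset.add_sum_erase _ _ (Finset.mem_attach _ x),
    ← Finset.add_sum_erase _ r.1 (Finset.mem_attach _ x), hx,
    Finset.sum_congr rfl fun y hy => hne y (Finset.ne_of_mem_erase hy)]
  ring

variable [DecidableEq N]

/-- The matrix of `opX P i` in the basis of labellings; the matrix of `opY P i` is its
transpose. -/
def edgeMatrix (P : Elt adj pos k extra → Elt adj pos k extra → ℚ) (i : N) :
    Matrix (Elt adj pos k extra) (Elt adj pos k extra) ℂ :=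
  Matrix.of fun s r => if edge i r s then (Real.sqrt (P r s) : ℂ) else 0

theorem edge_of_edgeMatrix_ne_zero (h : edgeMatrix P i s r ≠ 0) : edge i r s :=
  (ite_ne_right_iff.mp h).1

theorem opX_eq_mulVecLin : opX P i = (edgeMatrix P i).mulVecLin := rfl

theorem opY_eq_mulVecLin : opY P i = (edgeMatrix P i).transpose.mulVecLin := rfl

theorem opX_single (h : ∀ s, ¬edge i t s) : opX P i (Pi.single t 1) = 0 := by
  funext s
  rw [opX_eq_mulVecLin, Matrix.mulVecLin_apply, Matrix.mulVec_single_one]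
  exact if_neg (h s)

theorem opY_single (h : ∀ s, ¬edge i s t) : opY P i (Pi.single t 1) = 0 := by
  funext s
  rw [opY_eq_mulVecLin, Matrix.mulVecLin_apply, Matrix.mulVec_single_one]
  exact if_neg (h s)

/-- The contributions to the coefficient of `v_s` in `X_i v` can only cancel if there are two. -/
theorem exists_ne_edge_apply_ne_zero {v : Elt adj pos k extra → ℂ} (hP : 0 < P r s)
    (h : edge i r s) (hX : opX P i v s = 0) (hv : v r ≠ 0) :
    ∃ r', r' ≠ r ∧ edge i r' s ∧ v r' ≠ 0 := by
  by_contra! hne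
  have entry_ne_zero : edgeMatrix P i s r ≠ 0 := by
    rw [edgeMatrix, Matrix.of_apply, if_pos h, Complex.ofReal_ne_zero]
    exact (Real.sqrt_pos.mpr (by exact_mod_cast hP)).ne'
  refine mul_ne_zero entry_ne_zero hv (.trans (.symm ?_) hX)
  refine Finset.sum_eq_single_of_mem r (Finset.mem_univ r) fun r' _ hr' => ?_
  by_contra hterm
  exact right_ne_zero_of_mul hterm
    (hne r' hr' (edge_of_edgeMatrix_ne_zero (left_ne_zero_of_mul hterm)))

omit [DecidableEq N] in
theorem opH_single :
    opH i (Pi.single t 1) = (mwt i t : ℂ) • (Pi.single t 1 : Elt adj pos k extra → ℂ) := by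
  rw [opH, Matrix.mulVecLin_apply, Matrix.diagonal_mulVec_single, mul_one, ← Pi.single_smul,
    smul_eq_mul, mul_one]

theorem opX_dotProduct (v w : Elt adj pos k extra → ℂ) :
    opX P i v ⬝ᵥ w = v ⬝ᵥ opY P i w := by
  rw [opX_eq_mulVecLin, opY_eq_mulVecLin, Matrix.mulVecLin_apply, Matrix.mulVecLin_apply,
    Matrix.dotProduct_mulVec, Matrix.vecMul_transpose]

section Weight

variable {w : Elt adj pos k extra → ℤ}

omit [DecidableEq N] in
theorem sub_eq_two_mul_rk_sub_of_mem_comp (hw : ∀ r s, edge i r s → w s = w r + 2)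
    (hs : s ∈ comp i t) : w s - w t = 2 * ((rk s : ℤ) - rk t) := by
  induction hs with
  | refl => lia
  | tail _ h ih =>
    rcases h with h | h <;> have := hw _ _ h <;> have := rk_of_edge h <;> lia

variable (hw : ∀ r s, edge i r s → w s = w r + 2)
  (hlie : ⁅opX P i, opY P i⁆ = (Matrix.diagonal fun t => (w t : ℂ)).mulVecLin)

include hw hlie

theorem exists_mem_comp_eq_neg_of_forall_not_edge_left (ht : ∀ s, ¬edge i t s) :
    ∃ s ∈ comp i t, w s = -w t :=
  exists_reflTransGen_eq_neg hlie (fun _ _ h => hw _ _ (edge_of_edgeMatrix_ne_zero h))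
    (fun _ _ h => eq_sub_of_add_eq (hw _ _ (edge_of_edgeMatrix_ne_zero h)).symm)
    (fun _ _ h => .inr (edge_of_edgeMatrix_ne_zero h)) (opX_single ht)

theorem exists_mem_comp_eq_neg_of_forall_not_edge_right (ht : ∀ s, ¬edge i s t) :
    ∃ s ∈ comp i t, w s = -w t := by
  have hlie' : ⁅opY P i, opX P i⁆ = (Matrix.diagonal fun t => ((-w t : ℤ) : ℂ)).mulVecLin := by
    rw [← lie_skew, hlie]
    refine LinearMap.ext fun v => funext fun s => ?_
    simp only [LinearMap.neg_apply, Pi.neg_apply, Matrix.mulVecLin_apply,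
      Matrix.mulVec_diagonal, Int.cast_neg, neg_mul]
  obtain ⟨s, hs, w_s⟩ : ∃ s ∈ comp i t, -w s = - -w t :=
    exists_reflTransGen_eq_neg hlie'
      (fun _ _ h => by rw [hw _ _ (edge_of_edgeMatrix_ne_zero h)]; ring)
      (fun _ _ h => by rw [hw _ _ (edge_of_edgeMatrix_ne_zero h)]; ring)
      (fun _ _ h => .inl (edge_of_edgeMatrix_ne_zero h)) (opY_single ht)
  exact ⟨s, hs, neg_injective w_s⟩

/-- Both ends of a colour component carry opposite weights, and the rank grows by `1` where the
weight grows by `2`. -/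
theorem mwt_eq_of_lie_eq_diagonal : mwt i t = w t := by
  have comp_nonempty : (rk '' comp i t).Nonempty := ⟨rk t, t, .refl, rfl⟩
  have rk_bdd : BddAbove (rk '' comp i t) := (Set.toFinite _).bddAbove
  obtain ⟨top, top_mem, rk_top⟩ := Nat.sSup_mem comp_nonempty rk_bdd
  obtain ⟨bot, bot_mem, rk_bot⟩ := Nat.sInf_mem comp_nonempty
  have rk_le_top {s} (hs : s ∈ comp i t) : rk s ≤ rk top :=
    rk_top ▸ le_csSup rk_bdd (Set.mem_image_of_mem rk hs)
  have rk_bot_le {s} (hs : s ∈ comp i t) : rk bot ≤ rk s :=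
    rk_bot ▸ Nat.sInf_le (Set.mem_image_of_mem rk hs)
  have not_edge_top (s) (h : edge i top s) : False := by
    have := rk_le_top (top_mem.tail (.inl h))
    have := rk_of_edge h
    lia
  have not_edge_bot (s) (h : edge i s bot) : False := by
    have := rk_bot_le (bot_mem.tail (.inr h))
    have := rk_of_edge h
    lia
  obtain ⟨s, hs, w_s⟩ := exists_mem_comp_eq_neg_of_forall_not_edge_left hw hlie not_edge_top
  obtain ⟨s', hs', w_s'⟩ := exists_mem_comp_eq_neg_of_forall_not_edge_right hw hlie not_edge_bot
  have := sub_eq_two_mul_rk_sub_of_mem_comp hw top_mem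
  have := sub_eq_two_mul_rk_sub_of_mem_comp hw bot_mem
  have := sub_eq_two_mul_rk_sub_of_mem_comp hw (top_mem.trans hs)
  have := sub_eq_two_mul_rk_sub_of_mem_comp hw (bot_mem.trans hs')
  have := rk_bot_le (top_mem.trans hs)
  have := rk_le_top (bot_mem.trans hs')
  rw [mwt, ← rk_top, ← rk_bot]
  lia

end Weight

section Irreducible

variable {U : Submodule ℂ (Elt adj pos k extra → ℂ)} {t₀ : Elt adj pos k extra}

theorem rk_gt_of_opX_apply_ne_zero {v : Elt adj pos k extra → ℂ} {n : ℕ}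
    (hv : ∀ t, v t ≠ 0 → n ≤ rk t) (hs : opX P i v s ≠ 0) : n < rk s := by
  obtain ⟨r, -, hr⟩ := Finset.exists_ne_zero_of_sum_ne_zero hs
  have := hv r (right_ne_zero_of_mul hr)
  have := rk_of_edge (edge_of_edgeMatrix_ne_zero (left_ne_zero_of_mul hr))
  lia

/-- The raising operators increase the rank, so a vector of `U` whose support starts at the
largest possible rank is killed by them. -/
theorem exists_mem_ne_zero_forall_opX_eq_zero (hU : ∀ i, ∀ v ∈ U, opX P i v ∈ U) (hne : U ≠ ⊥) :
    ∃ v ∈ U, v ≠ 0 ∧ ∀ i, opX P i v = 0 := by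
  let StartsAt (n : ℕ) : Prop := ∃ v ∈ U, v ≠ 0 ∧ ∀ t, v t ≠ 0 → n ≤ rk t
  have startsAt_zero : StartsAt 0 := by
    obtain ⟨v, hvU, hv⟩ := U.exists_mem_ne_zero_of_ne_bot hne
    exact ⟨v, hvU, hv, fun t _ => Nat.zero_le _⟩
  have exists_not_startsAt : ∃ n, ¬StartsAt n := by
    refine ⟨∑ t : Elt adj pos k extra, rk t + 1, ?_⟩
    rintro ⟨v, -, hv, hn⟩
    obtain ⟨t, ht⟩ := Function.ne_iff.mp hv
    have := hn t ht
    have := Finset.single_le_sum (f := rk) (fun t _ => Nat.zero_le _) (Finset.mem_univ t)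
    lia
  obtain ⟨n, hn, hn'⟩ :=
    Nat.exists_not_and_succ_of_not_zero_of_exists (not_not.mpr startsAt_zero) exists_not_startsAt
  obtain ⟨v, hvU, hv, hvn⟩ := not_not.mp hn
  refine ⟨v, hvU, hv, fun i => ?_⟩
  by_contra hXv
  exact hn' ⟨_, hU i v hvU, hXv, fun s hs => rk_gt_of_opX_apply_ne_zero hvn hs⟩

theorem single_mem_of_opX_mem (htop : ∀ i, opX P i (Pi.single t₀ 1) = 0)
    (hker : ∀ v, (∀ i, opX P i v = 0) → v t₀ = 0 → v = 0)
    (hU : ∀ i, ∀ v ∈ U, opX P i v ∈ U) (hne : U ≠ ⊥) : Pi.single t₀ 1 ∈ U := by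
  obtain ⟨v, hvU, hv, hXv⟩ := exists_mem_ne_zero_forall_opX_eq_zero hU hne
  have v_eq : v - v t₀ • Pi.single t₀ 1 = 0 := by
    refine hker _ (fun i => ?_) ?_
    · rw [map_sub, map_smul, hXv, htop, smul_zero, sub_zero]
    · rw [Pi.sub_apply, Pi.smul_apply, Pi.single_eq_same, smul_eq_mul, mul_one, sub_self]
  have coeff_ne_zero : v t₀ ≠ 0 := fun h => hv (hker v hXv h)
  rw [sub_eq_zero] at v_eq
  rwa [v_eq, U.smul_mem_iff coeff_ne_zero] at hvU

/-- The orthogonal complement of an invariant subspace is invariant, and only one of the two can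
contain the highest weight vector. -/
theorem eq_bot_or_eq_top_of_opX_mem_of_opY_mem (htop : ∀ i, opX P i (Pi.single t₀ 1) = 0)
    (hker : ∀ v, (∀ i, opX P i v = 0) → v t₀ = 0 → v = 0)
    (hX : ∀ i, ∀ v ∈ U, opX P i v ∈ U) (hY : ∀ i, ∀ v ∈ U, opY P i v ∈ U) :
    U = ⊥ ∨ U = ⊤ := by
  by_contra! hne
  let W : Submodule ℂ (Elt adj pos k extra → ℂ) :=
    U.dualAnnihilator.comap (dotProductEquiv ℂ (Elt adj pos k extra)).toLinearMap
  have mem_W {w} : w ∈ W ↔ ∀ u ∈ U, w ⬝ᵥ u = 0 := Submodule.mem_dualAnnihilator _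
  have W_ne_bot : W ≠ ⊥ := by
    obtain ⟨f, hf, hUf⟩ := U.exists_le_ker_of_lt_top hne.2.lt_top
    obtain ⟨w, rfl⟩ := (dotProductEquiv ℂ (Elt adj pos k extra)).surjective f
    exact W.ne_bot_iff.mpr ⟨w, mem_W.mpr fun u hu => LinearMap.mem_ker.mp (hUf hu),
      fun hw => hf (by rw [hw, map_zero])⟩
  have W_invariant (i : N) : ∀ w ∈ W, opX P i w ∈ W := fun w hw =>
    mem_W.mpr fun u hu => by rw [opX_dotProduct, mem_W.mp hw _ (hY i u hu)]
  have := mem_W.mp (single_mem_of_opX_mem htop hker W_invariant W_ne_bot) _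
    (single_mem_of_opX_mem htop hker hX hne.1)
  rw [single_one_dotProduct, Pi.single_eq_same] at this
  exact one_ne_zero this

end Irreducible

end CL

/-! ### Coloured heaps and their labellings -/

theorem prod_erase_product_bool {ι M : Type*} [DecidableEq ι] [CommMonoid M] {S : Finset ι}
    {x : ι} (hx : x ∈ S) (b : Bool) (f : ι × Bool → M) :
    ∏ p ∈ (S ×ˢ Finset.univ).erase (x, b), f p =
      f (x, !b) * ∏ u ∈ S.erase x, (f (u, true) * f (u, false)) := by
  have erase_eq : (S ×ˢ Finset.univ).erase (x, b) =
      insert (x, !b) (S.erase x ×ˢ (Finset.univ : Finset Bool)) := by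
    ext ⟨u, c⟩
    rcases eq_or_ne u x with rfl | hu
    · cases b <;> cases c <;> simp [hx]
    · simp [hu]
  rw [erase_eq, Finset.prod_insert (by simp), Finset.prod_product]
  simp only [Fintype.prod_bool]

/-- A finite heap over the graph `G`: a ranked set whose elements are coloured by the vertices of
`G`. The order is generated by the steps from an element to one of adjacent colour and next rank,
and any two elements of equal or adjacent colours are comparable. -/
structure ColoredHeap {C : Type*} (G : SimpleGraph C) (E : Type*) where
  color : E → C
  rank : E → ℕ
  comparable : ∀ u v, u ≠ v → (color u = color v ∨ G.Adj (color u) (color v)) →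
    Relation.TransGen (fun u v => G.Adj (color u) (color v) ∧ rank v = rank u + 1) u v ∨
      Relation.TransGen (fun u v => G.Adj (color u) (color v) ∧ rank v = rank u + 1) v u

namespace ColoredHeap

variable {C E : Type*} {G : SimpleGraph C} {H : ColoredHeap G E} {g g' : E → ℤ} {i : C}
  {u v x y : E}

/-- The covering steps of the heap. -/
def Step (H : ColoredHeap G E) (u v : E) : Prop :=
  G.Adj (H.color u) (H.color v) ∧ H.rank v = H.rank u + 1

/-- The strict order of the heap. -/
def Below (H : ColoredHeap G E) : E → E → Prop := Relation.TransGen H.Step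

theorem rank_lt_of_below (h : H.Below u v) : H.rank u < H.rank v := by
  induction h with
  | single h => exact h.2 ▸ Nat.lt_succ_self _
  | tail _ h ih => exact h.2 ▸ ih.trans (Nat.lt_succ_self _)

theorem below_of_rank_lt (hc : H.color u = H.color v ∨ G.Adj (H.color u) (H.color v))
    (hr : H.rank u < H.rank v) : H.Below u v := by
  have hne : u ≠ v := fun h => hr.ne (congrArg H.rank h)
  exact (H.comparable u v hne hc).resolve_right fun h => hr.not_gt (rank_lt_of_below h)

theorem rank_ne (hc : H.color u = H.color v ∨ G.Adj (H.color u) (H.color v)) (hne : u ≠ v) :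
    H.rank u ≠ H.rank v := by
  rcases H.comparable u v hne hc with h | h
  · exact (rank_lt_of_below h).ne
  · exact (rank_lt_of_below h).ne'

theorem rank_add_two_le (hc : H.color u = H.color v) (hr : H.rank u < H.rank v) :
    H.rank u + 2 ≤ H.rank v := by
  rcases Relation.TransGen.head'_iff.mp (below_of_rank_lt (.inl hc) hr) with ⟨w, huw, hwv⟩
  rcases hwv.cases_head with rfl | ⟨w', hww', hw'v⟩
  · exact absurd (hc ▸ huw.1) (G.loopless.irrefl _)
  · have : H.Below w v := .head' hww' hw'v
    have := rank_lt_of_below this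
    have := huw.2
    lia

/-- Every element `x` of colour `i` has a lower neighbour `β x true` and an upper neighbour
`β x false`, and these exhaust without repetition the elements of colour adjacent to `i`. -/
structure IsInterlacing (H : ColoredHeap G E) (i : C) (β : E → Bool → E) : Prop where
  step_true : ∀ x, H.color x = i → H.Step (β x true) x
  step_false : ∀ x, H.color x = i → H.Step x (β x false)
  existsUnique : ∀ y, G.Adj i (H.color y) → ∃! p : E × Bool, H.color p.1 = i ∧ β p.1 p.2 = y

theorem IsInterlacing.adj {β : E → Bool → E} (hβ : H.IsInterlacing i β) (hx : H.color x = i)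
    (b : Bool) : G.Adj i (H.color (β x b)) := by
  cases b
  · exact hx ▸ (hβ.step_false x hx).1
  · exact hx ▸ (hβ.step_true x hx).1.symm

/-- An order-reversing integer labelling of the heap. -/
def IsLabelling (H : ColoredHeap G E) (g : E → ℤ) : Prop := ∀ ⦃u v⦄, H.Step u v → g v ≤ g u

namespace IsLabelling

theorem le_of_below (hg : H.IsLabelling g) (h : H.Below u v) : g v ≤ g u := by
  induction h with
  | single h => exact hg h
  | tail _ h ih => exact (hg h).trans ih

theorem le_of_rank_lt (hg : H.IsLabelling g)
    (hc : H.color u = H.color v ∨ G.Adj (H.color u) (H.color v)) (hr : H.rank u < H.rank v) :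
    g v ≤ g u :=
  hg.le_of_below (below_of_rank_lt hc hr)

theorem inf (hg : H.IsLabelling g) (hg' : H.IsLabelling g') : H.IsLabelling (g ⊓ g') :=
  fun _ _ h => inf_le_inf (hg h) (hg' h)

theorem sup (hg : H.IsLabelling g) (hg' : H.IsLabelling g') : H.IsLabelling (g ⊔ g') :=
  fun _ _ h => sup_le_sup (hg h) (hg' h)

variable [DecidableEq E]

theorem exists_step_of_not_add_single (hg : H.IsLabelling g)
    (h : ¬H.IsLabelling (g + Pi.single x 1)) : ∃ u, H.Step u x ∧ g x = g u := by
  simp only [IsLabelling, not_forall, not_le] at h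
  obtain ⟨u, v, huv, hlt⟩ := h
  have hle := hg huv
  have hux : u ≠ x ∧ v = x := by
    simp only [Pi.add_apply, Pi.single_apply] at hlt
    grind
  obtain ⟨hux, rfl⟩ := hux
  refine ⟨u, huv, ?_⟩
  rw [Pi.add_apply, Pi.add_apply, Pi.single_eq_same, Pi.single_eq_of_ne hux] at hlt
  lia

theorem exists_step_of_not_sub_single (hg : H.IsLabelling g)
    (h : ¬H.IsLabelling (g - Pi.single x 1)) : ∃ v, H.Step x v ∧ g x = g v := by
  simp only [IsLabelling, not_forall, not_le] at h
  obtain ⟨u, v, huv, hlt⟩ := h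
  have hle := hg huv
  have hvx : v ≠ x ∧ u = x := by
    simp only [Pi.sub_apply, Pi.single_apply] at hlt
    grind
  obtain ⟨hvx, rfl⟩ := hvx
  refine ⟨v, huv, ?_⟩
  rw [Pi.sub_apply, Pi.sub_apply, Pi.single_eq_same, Pi.single_eq_of_ne hvx] at hlt
  lia

end IsLabelling

section Classes

variable [Fintype E] [DecidableEq C]

/-- The elements of colour `i`. -/
def colorClass (H : ColoredHeap G E) (i : C) : Finset E := {x | H.color x = i}

theorem mem_colorClass : x ∈ H.colorClass i ↔ H.color x = i := Finset.mem_filter_univ x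

variable [DecidableRel G.Adj]

/-- The elements whose colour is adjacent to `i`. -/
def adjacentClass (H : ColoredHeap G E) (i : C) : Finset E := {y | G.Adj i (H.color y)}

omit [DecidableEq C] in
theorem mem_adjacentClass : y ∈ H.adjacentClass i ↔ G.Adj i (H.color y) :=
  Finset.mem_filter_univ y

@[to_additive]
theorem IsInterlacing.prod_adjacentClass {β : E → Bool → E} {M : Type*} [CommMonoid M]
    (hβ : H.IsInterlacing i β) (f : E → M) :
    ∏ y ∈ H.adjacentClass i, f y = ∏ x ∈ H.colorClass i, (f (β x true) * f (β x false)) := by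
  rw [Finset.prod_congr rfl fun x _ => (Fintype.prod_bool fun b => f (β x b)).symm,
    ← Finset.prod_product']
  refine (Finset.prod_nbij (fun p : E × Bool => β p.1 p.2) ?_ ?_ ?_ fun _ _ => rfl).symm
  · intro p hp
    exact mem_adjacentClass.mpr (hβ.adj (mem_colorClass.mp (Finset.mem_product.mp hp).1) _)
  · intro p hp p' hp' h
    have color_p := mem_colorClass.mp (Finset.mem_product.mp hp).1
    have color_p' := mem_colorClass.mp (Finset.mem_product.mp hp').1
    exact (hβ.existsUnique _ (hβ.adj color_p p.2)).unique ⟨color_p, rfl⟩ ⟨color_p', h.symm⟩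
  · intro y hy
    obtain ⟨p, ⟨color_p, hp⟩, -⟩ := hβ.existsUnique y (mem_adjacentClass.mp hy)
    exact ⟨p, Finset.mem_coe.mpr (Finset.mem_product.mpr
      ⟨mem_colorClass.mpr color_p, Finset.mem_univ _⟩), hp⟩

end Classes

/-! ### Gelfand–Tsetlin coefficients on labellings -/

/-- The label of `x` shifted by half its rank, so that the coefficients below only involve
differences of shifted labels. -/
def shifted (H : ColoredHeap G E) (g : E → ℤ) (x : E) : ℚ := g x - H.rank x / 2

theorem shifted_add_one_le (hg : H.IsLabelling g) (hc : H.color u = H.color v)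
    (hr : H.rank u < H.rank v) : H.shifted g v + 1 ≤ H.shifted g u := by
  have label_le : (g v : ℚ) ≤ g u := by exact_mod_cast hg.le_of_rank_lt (.inl hc) hr
  have rank_le : (H.rank u : ℚ) + 2 ≤ H.rank v := by exact_mod_cast rank_add_two_le hc hr
  rw [shifted, shifted]
  linarith

theorem eq_of_shifted_eq_add_one (hg : H.IsLabelling g) (hc : H.color u = H.color v)
    (hr : H.rank u < H.rank v) (h : H.shifted g u = H.shifted g v + 1) : g u = g v := by
  have label_le : (g v : ℚ) ≤ g u := by exact_mod_cast hg.le_of_rank_lt (.inl hc) hr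
  have rank_le : (H.rank u : ℚ) + 2 ≤ H.rank v := by exact_mod_cast rank_add_two_le hc hr
  rw [shifted, shifted] at h
  have : (g u : ℚ) = g v := by linarith
  exact_mod_cast this

variable [DecidableEq E]

theorem shifted_add_single : H.shifted (g + Pi.single x 1) u =
    H.shifted g u + (Pi.single x 1 : E → ℚ) u := by
  rw [shifted, shifted, Pi.add_apply]
  simp only [Pi.single_apply]
  push_cast
  ring

theorem shifted_sub_single : H.shifted (g - Pi.single x 1) u =
    H.shifted g u - (Pi.single x 1 : E → ℚ) u := by
  rw [shifted, shifted, Pi.sub_apply]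
  simp only [Pi.single_apply]
  push_cast
  ring

variable [DecidableEq C] [DecidableRel G.Adj]

/-- The factor contributed by `u` to the coefficient at `x`, when `d` is the difference of their
shifted labels. -/
def pairFactor (H : ColoredHeap G E) (x u : E) (d : ℚ) : ℚ :=
  if G.Adj (H.color x) (H.color u) then d + 1 / 2
  else if H.color x = H.color u ∧ u ≠ x then (d * (d + 1))⁻¹ else 1

theorem pairFactor_mul_pairFactor (d : ℚ) :
    H.pairFactor y x (-d - 1) * H.pairFactor x y (d - 1) =
      H.pairFactor x y d * H.pairFactor y x (-d) := by
  unfold pairFactor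
  simp only [G.adj_comm (H.color y), eq_comm (a := H.color y), ne_comm (a := x)]
  split_ifs
  · ring
  · rw [← mul_inv, ← mul_inv]
    congr 1
    ring
  · rfl

variable [Fintype E]

/-- The square of the Gelfand–Tsetlin coefficient for raising the label at `x`. -/
def edgeCoeff (H : ColoredHeap G E) (g : E → ℤ) (x : E) : ℚ :=
  -∏ u, H.pairFactor x u (H.shifted g x - H.shifted g u)

theorem exists_edgeCoeff_eq_mul_pairFactor (h : x ≠ y) : ∃ c : ℚ,
    H.edgeCoeff g x = c * H.pairFactor x y (H.shifted g x - H.shifted g y) ∧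
      H.edgeCoeff (g + Pi.single y 1) x =
        c * H.pairFactor x y (H.shifted g x - H.shifted g y - 1) := by
  refine ⟨-∏ u ∈ Finset.univ.erase y, H.pairFactor x u (H.shifted g x - H.shifted g u), ?_, ?_⟩
  · rw [edgeCoeff, ← Finset.mul_prod_erase Finset.univ _ (Finset.mem_univ y)]
    ring
  · rw [edgeCoeff, ← Finset.mul_prod_erase Finset.univ _ (Finset.mem_univ y)]
    have others : ∀ u ∈ Finset.univ.erase y,
        H.pairFactor x u (H.shifted (g + Pi.single y 1) x - H.shifted (g + Pi.single y 1) u) =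
          H.pairFactor x u (H.shifted g x - H.shifted g u) := fun u hu => by
      rw [shifted_add_single, shifted_add_single, Pi.single_eq_of_ne h,
        Pi.single_eq_of_ne (Finset.ne_of_mem_erase hu), add_zero, add_zero]
    rw [Finset.prod_congr rfl others, shifted_add_single, shifted_add_single,
      Pi.single_eq_of_ne h, Pi.single_eq_same, add_zero, sub_add_eq_sub_sub]
    ring

theorem edgeCoeff_mul_edgeCoeff (h : x ≠ y) :
    H.edgeCoeff (g + Pi.single x 1) y * H.edgeCoeff (g + Pi.single y 1) x =
      H.edgeCoeff g x * H.edgeCoeff g y := by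
  obtain ⟨c, hx, hxy⟩ := exists_edgeCoeff_eq_mul_pairFactor (H := H) (g := g) h
  obtain ⟨c', hy, hyx⟩ := exists_edgeCoeff_eq_mul_pairFactor (H := H) (g := g) h.symm
  have swap := pairFactor_mul_pairFactor (H := H) (x := x) (y := y) (H.shifted g x - H.shifted g y)
  rw [neg_sub] at swap
  rw [hx, hxy, hy, hyx]
  linear_combination c * c' * swap

theorem edgeCoeff_eq_zero (hg : H.IsLabelling g) (h : ¬H.IsLabelling (g + Pi.single x 1)) :
    H.edgeCoeff g x = 0 := by
  obtain ⟨u, hux, label_eq⟩ := hg.exists_step_of_not_add_single h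
  have rank_eq : (H.rank x : ℚ) = H.rank u + 1 := by exact_mod_cast hux.2
  rw [edgeCoeff, neg_eq_zero]
  refine Finset.prod_eq_zero (Finset.mem_univ u) ?_
  rw [pairFactor, if_pos hux.1.symm, shifted, shifted, label_eq, rank_eq]
  ring

theorem edgeCoeff_sub_single_eq_zero (hg : H.IsLabelling g)
    (h : ¬H.IsLabelling (g - Pi.single x 1)) : H.edgeCoeff (g - Pi.single x 1) x = 0 := by
  obtain ⟨v, hxv, label_eq⟩ := hg.exists_step_of_not_sub_single h
  have hne : v ≠ x := fun h => G.loopless.irrefl _ (h ▸ hxv.1)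
  have rank_eq : (H.rank v : ℚ) = H.rank x + 1 := by exact_mod_cast hxv.2
  rw [edgeCoeff, neg_eq_zero]
  refine Finset.prod_eq_zero (Finset.mem_univ v) ?_
  rw [pairFactor, if_pos hxv.1, shifted_sub_single, shifted_sub_single, Pi.single_eq_same,
    Pi.single_eq_of_ne hne, shifted, shifted, label_eq, rank_eq]
  ring

theorem prod_pairFactor (hx : x ∈ H.colorClass i) (d : E → ℚ) :
    ∏ u, H.pairFactor x u (d u) = (∏ y ∈ H.adjacentClass i, (d y + 1 / 2)) /
      ∏ u ∈ (H.colorClass i).erase x, (d u * (d u + 1)) := by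
  have factor_eq (u : E) : H.pairFactor x u (d u) =
      (if u ∈ H.adjacentClass i then d u + 1 / 2 else 1) *
        if u ∈ (H.colorClass i).erase x then (d u * (d u + 1))⁻¹ else 1 := by
    simp only [pairFactor, mem_adjacentClass, Finset.mem_erase, mem_colorClass,
      mem_colorClass.mp hx]
    grind [SimpleGraph.irrefl]
  rw [Finset.prod_congr rfl fun u _ => factor_eq u, Finset.prod_mul_distrib,
    div_eq_mul_inv (∏ y ∈ _, _), ← Finset.prod_inv_distrib, Finset.prod_ite_mem,
    Finset.prod_ite_mem, Finset.univ_inter, Finset.univ_inter]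

theorem edgeCoeff_eq (hx : x ∈ H.colorClass i) : H.edgeCoeff g x =
    -((∏ y ∈ H.adjacentClass i, (H.shifted g x - H.shifted g y + 1 / 2)) /
      ∏ u ∈ (H.colorClass i).erase x, ((H.shifted g x - H.shifted g u) *
        (H.shifted g x - H.shifted g u + 1))) := by
  rw [edgeCoeff, prod_pairFactor hx]

section Positivity

omit [DecidableEq E] [DecidableEq C] [DecidableRel G.Adj] [Fintype E] in
theorem shifted_lt_of_rank_lt (hg : H.IsLabelling g)
    (hc : H.color u = H.color v ∨ G.Adj (H.color u) (H.color v)) (hr : H.rank u < H.rank v) :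
    H.shifted g v < H.shifted g u := by
  have label_le : (g v : ℚ) ≤ g u := by exact_mod_cast hg.le_of_rank_lt hc hr
  have rank_lt : (H.rank u : ℚ) < H.rank v := by exact_mod_cast hr
  rw [shifted, shifted]
  linarith

omit [DecidableEq C] [DecidableRel G.Adj] [Fintype E] in
theorem shifted_add_one_lt_of_rank_lt (hgx : H.IsLabelling (g + Pi.single x 1))
    (hc : H.color u = H.color x ∨ G.Adj (H.color u) (H.color x)) (hr : H.rank u < H.rank x) :
    H.shifted g x + 1 < H.shifted g u := by
  have hux : u ≠ x := fun h => hr.ne (congrArg H.rank h)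
  have := shifted_lt_of_rank_lt hgx hc hr
  rwa [shifted_add_single, shifted_add_single, Pi.single_eq_same, Pi.single_eq_of_ne hux,
    add_zero] at this

variable {β : E → Bool → E} (hβ : H.IsInterlacing i β) (hx : x ∈ H.colorClass i)
  (hg : H.IsLabelling g) (hgx : H.IsLabelling (g + Pi.single x 1))

omit [DecidableRel G.Adj] in
include hx hg hgx in
theorem shifted_sub_mul_pos (hu : u ∈ (H.colorClass i).erase x) :
    0 < (H.shifted g x - H.shifted g u) * (H.shifted g x - H.shifted g u + 1) := by
  obtain ⟨hux, hu⟩ := Finset.mem_erase.mp hu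
  have hc : H.color u = H.color x := (mem_colorClass.mp hu).trans (mem_colorClass.mp hx).symm
  rcases (rank_ne (.inl hc) hux).lt_or_gt with hr | hr
  · have := shifted_add_one_lt_of_rank_lt hgx (.inl hc) hr
    exact mul_pos_of_neg_of_neg (by linarith) (by linarith)
  · have := shifted_lt_of_rank_lt hg (.inl hc.symm) hr
    exact mul_pos (by linarith) (by linarith)

omit [DecidableRel G.Adj] in
include hx hgx in
theorem adjacent_factor_neg_of_rank_lt (hc : G.Adj i (H.color u)) (hr : H.rank u < H.rank x) :
    H.shifted g x - H.shifted g u + 1 / 2 < 0 := by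
  have := shifted_add_one_lt_of_rank_lt hgx (.inr (mem_colorClass.mp hx ▸ hc.symm)) hr
  linarith

omit [DecidableEq E] [DecidableRel G.Adj] in
include hx hg in
theorem adjacent_factor_pos_of_rank_lt (hc : G.Adj i (H.color u)) (hr : H.rank x < H.rank u) :
    0 < H.shifted g x - H.shifted g u + 1 / 2 := by
  have := shifted_lt_of_rank_lt hg (.inr (mem_colorClass.mp hx ▸ hc)) hr
  linarith

omit [DecidableRel G.Adj] in
include hβ hx hg hgx in
/-- The two neighbours of another element of the same colour lie on the same side of `x`. -/
theorem adjacent_factor_mul_pos (hu : u ∈ (H.colorClass i).erase x) :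
    0 < (H.shifted g x - H.shifted g (β u true) + 1 / 2) *
      (H.shifted g x - H.shifted g (β u false) + 1 / 2) := by
  obtain ⟨hux, hu⟩ := Finset.mem_erase.mp hu
  have color_u := mem_colorClass.mp hu
  have color_x := mem_colorClass.mp hx
  have hc : H.color u = H.color x := color_u.trans color_x.symm
  have lower := (hβ.step_true u color_u).2
  have upper := (hβ.step_false u color_u).2
  rcases (rank_ne (.inl hc) hux).lt_or_gt with hr | hr
  · have := rank_add_two_le hc hr
    exact mul_pos_of_neg_of_neg
      (adjacent_factor_neg_of_rank_lt hx hgx (hβ.adj color_u _) (by lia))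
      (adjacent_factor_neg_of_rank_lt hx hgx (hβ.adj color_u _) (by lia))
  · have := rank_add_two_le hc.symm hr
    exact mul_pos
      (adjacent_factor_pos_of_rank_lt hx hg (hβ.adj color_u _) (by lia))
      (adjacent_factor_pos_of_rank_lt hx hg (hβ.adj color_u _) (by lia))

include hβ hx hg hgx in
theorem edgeCoeff_pos : 0 < H.edgeCoeff g x := by
  have color_x := mem_colorClass.mp hx
  have lower := (hβ.step_true x color_x).2
  have upper := (hβ.step_false x color_x).2
  rw [edgeCoeff_eq hx, neg_pos, hβ.prod_adjacentClass, ← Finset.mul_prod_erase _ _ hx]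
  refine div_neg_of_neg_of_pos (mul_neg_of_neg_of_pos (mul_neg_of_neg_of_pos ?_ ?_) ?_) ?_
  · exact adjacent_factor_neg_of_rank_lt hx hgx (hβ.adj color_x _) (by lia)
  · exact adjacent_factor_pos_of_rank_lt hx hg (hβ.adj color_x _) (by lia)
  · exact Finset.prod_pos fun u hu => adjacent_factor_mul_pos hβ hx hg hgx hu
  · exact Finset.prod_pos fun u hu => shifted_sub_mul_pos hx hg hgx hu

end Positivity

section Crossing

/-- The interpolation nodes `ℓ(x) ± 1/2`, for `ℓ` the shifted labels. -/
def node (H : ColoredHeap G E) (g : E → ℤ) (p : E × Bool) : ℚ :=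
  H.shifted g p.1 + if p.2 then 1 / 2 else -1 / 2

/-- The weight of a labelling for the colour `i`. -/
def weight (H : ColoredHeap G E) (i : C) (g : E → ℤ) : ℤ :=
  2 * ∑ x ∈ H.colorClass i, g x - ∑ y ∈ H.adjacentClass i, g y

theorem weight_add_single : H.weight i (g + Pi.single x 1) =
    H.weight i g + if i = H.color x then 2 else if G.Adj i (H.color x) then -1 else 0 := by
  have hi : ¬G.Adj i i := G.loopless.irrefl i
  simp only [weight, Pi.add_apply, Finset.sum_add_distrib, Pi.single_apply, Finset.sum_ite_eq',
    mem_colorClass, mem_adjacentClass]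
  grind

theorem edgeCoeff_eq_neg_node_quotient (hx : x ∈ H.colorClass i) : H.edgeCoeff g x =
    -((∏ y ∈ H.adjacentClass i, (H.node g (x, true) - H.shifted g y)) /
      ∏ p ∈ (H.colorClass i ×ˢ Finset.univ).erase (x, true),
        (H.node g (x, true) - H.node g p)) := by
  rw [edgeCoeff_eq hx, prod_erase_product_bool hx]
  simp only [node, Bool.not_true, if_true, Bool.false_eq_true, if_false]
  congr 2
  · exact Finset.prod_congr rfl fun y _ => by ring
  · rw [show H.shifted g x + 1 / 2 - (H.shifted g x + -1 / 2) = 1 by ring, one_mul]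
    exact Finset.prod_congr rfl fun u _ => by ring

theorem edgeCoeff_sub_single_eq_node_quotient (hx : x ∈ H.colorClass i) :
    H.edgeCoeff (g - Pi.single x 1) x =
      (∏ y ∈ H.adjacentClass i, (H.node g (x, false) - H.shifted g y)) /
        ∏ p ∈ (H.colorClass i ×ˢ Finset.univ).erase (x, false),
          (H.node g (x, false) - H.node g p) := by
  have shifted_of_ne {u} (hu : u ≠ x) : H.shifted (g - Pi.single x 1) u = H.shifted g u := by
    rw [shifted_sub_single, Pi.single_eq_of_ne hu, sub_zero]
  have ne_of_adj {y} (hy : y ∈ H.adjacentClass i) : y ≠ x := by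
    rintro rfl
    have := mem_adjacentClass.mp hy
    rw [mem_colorClass.mp hx] at this
    exact G.loopless.irrefl i this
  rw [edgeCoeff_eq hx, prod_erase_product_bool hx, shifted_sub_single, Pi.single_eq_same]
  simp only [node, Bool.not_false, if_true, Bool.false_eq_true, if_false]
  rw [show H.shifted g x + -1 / 2 - (H.shifted g x + 1 / 2) = -1 by ring, neg_one_mul, div_neg]
  congr 2
  · exact Finset.prod_congr rfl fun y hy => by rw [shifted_of_ne (ne_of_adj hy)]; ring
  · refine Finset.prod_congr rfl fun u hu => ?_
    rw [shifted_of_ne (Finset.ne_of_mem_erase hu)]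
    ring

variable {β : E → Bool → E} (hβ : H.IsInterlacing i β)

include hβ

omit [DecidableEq E] [DecidableEq C] [DecidableRel G.Adj] [Fintype E] in
theorem shifted_eq_node {b : Bool} (hx : H.color x = i) (h : g (β x b) = g x) :
    H.shifted g (β x b) = H.node g (x, b) := by
  cases b
  · have rank_eq : (H.rank (β x false) : ℚ) = H.rank x + 1 := by
      exact_mod_cast (hβ.step_false x hx).2
    simp only [node, shifted, h, rank_eq, Bool.false_eq_true, if_false]
    ring
  · have rank_eq : (H.rank x : ℚ) = H.rank (β x true) + 1 := by
      exact_mod_cast (hβ.step_true x hx).2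
    simp only [node, shifted, h, rank_eq, if_true]
    ring

omit [DecidableEq E] [DecidableEq C] [DecidableRel G.Adj] [Fintype E] in
/-- Two nodes coincide only if the labels of their elements agree, and then the label of the
neighbour squeezed between these elements agrees with them. -/
theorem shifted_eq_node_of_node_eq (hg : H.IsLabelling g) {b b' : Bool} (hx : H.color x = i)
    (hy : H.color y = i) (hne : (y, b') ≠ (x, b)) (h : H.node g (y, b') = H.node g (x, b)) :
    H.shifted g (β x b) = H.node g (x, b) := by
  refine shifted_eq_node hβ hx ?_
  have hc : H.color y = H.color x := hy.trans hx.symm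
  have hyx : y ≠ x := by
    rintro rfl
    grind [node]
  rcases (rank_ne (.inl hc) hyx).lt_or_gt with hr | hr
  · have gap := rank_add_two_le hc hr
    have shifted_le := shifted_add_one_le hg hc hr
    obtain ⟨rfl, shifted_eq⟩ : b = true ∧ H.shifted g y = H.shifted g x + 1 := by
      cases b <;> cases b' <;> norm_num [node] at h ⊢ <;> linarith
    have label_eq := eq_of_shifted_eq_add_one hg hc hr shifted_eq
    have step := hβ.step_true x hx
    have := hg.le_of_rank_lt (.inr (hy ▸ hβ.adj hx true)) (by have := step.2; lia)
    exact le_antisymm (this.trans_eq label_eq) (hg step)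
  · have gap := rank_add_two_le hc.symm hr
    have shifted_le := shifted_add_one_le hg hc.symm hr
    obtain ⟨rfl, shifted_eq⟩ : b = false ∧ H.shifted g x = H.shifted g y + 1 := by
      cases b <;> cases b' <;> norm_num [node] at h ⊢ <;> linarith
    have label_eq := eq_of_shifted_eq_add_one hg hc.symm hr shifted_eq
    have step := hβ.step_false x hx
    have := hg.le_of_rank_lt (.inr (hy ▸ (hβ.adj hx false).symm)) (by have := step.2; lia)
    exact le_antisymm (hg step) (label_eq.trans_le this)

omit [DecidableEq E] in
theorem sum_node_sub_shifted : ∑ p ∈ H.colorClass i ×ˢ Finset.univ,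
    (H.node g p - H.shifted g (β p.1 p.2)) = H.weight i g := by
  have pair_eq : ∀ x ∈ H.colorClass i, H.node g (x, true) - H.shifted g (β x true) +
      (H.node g (x, false) - H.shifted g (β x false)) =
        2 * g x - (g (β x true) + g (β x false)) := fun x hx => by
    have lower : (H.rank x : ℚ) = H.rank (β x true) + 1 := by
      exact_mod_cast (hβ.step_true x (mem_colorClass.mp hx)).2
    have upper : (H.rank (β x false) : ℚ) = H.rank x + 1 := by
      exact_mod_cast (hβ.step_false x (mem_colorClass.mp hx)).2
    simp only [node, shifted, upper, lower, if_true, Bool.false_eq_true, if_false]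
    ring
  rw [Finset.sum_product]
  simp only [Fintype.sum_bool]
  rw [Finset.sum_congr rfl pair_eq, weight, hβ.sum_adjacentClass g]
  push_cast
  rw [Finset.sum_sub_distrib, Finset.mul_sum]

theorem sum_edgeCoeff_sub_edgeCoeff (hg : H.IsLabelling g) : ∑ x ∈ H.colorClass i,
    (H.edgeCoeff (g - Pi.single x 1) x - H.edgeCoeff g x) = H.weight i g := by
  have numerator (p : E × Bool) : ∏ y ∈ H.adjacentClass i, (H.node g p - H.shifted g y) =
      ∏ p' ∈ H.colorClass i ×ˢ Finset.univ, (H.node g p - H.shifted g (β p'.1 p'.2)) := by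
    rw [hβ.prod_adjacentClass, Finset.prod_product]
    simp only [Fintype.prod_bool]
  have interpolation := sum_prod_sub_div_prod_sub (S := H.colorClass i ×ˢ Finset.univ) (H.node g)
    (fun p => H.shifted g (β p.1 p.2)) ?_
  · rw [← sum_node_sub_shifted hβ, ← interpolation, Finset.sum_product]
    refine Finset.sum_congr rfl fun x hx => ?_
    rw [edgeCoeff_sub_single_eq_node_quotient hx, edgeCoeff_eq_neg_node_quotient hx,
      Fintype.sum_bool, numerator, numerator]
    ring
  · intro p hp p' hp' hne h
    simp only [Finset.mem_product, mem_colorClass] at hp hp'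
    exact shifted_eq_node_of_node_eq hβ hg hp.1 hp'.1 hne h

end Crossing

end ColoredHeap

/-! ### Raising operators on the labellings with prescribed frozen values -/

namespace ColoredHeap

variable {N E T : Type*} {G : SimpleGraph (Option N)} {H : ColoredHeap G E} {f g g' : E → ℤ}
  {x y : E}

/-- The labellings of a heap which agree with `f` on the frozen elements, that is, on the elements
of colour `none`. -/
def labellings (H : ColoredHeap G E) (f : E → ℤ) : Set (E → ℤ) :=
  {g | H.IsLabelling g ∧ ∀ e, H.color e = none → g e = f e}

variable [DecidableEq E]

theorem add_single_mem_labellings (hg : g ∈ H.labellings f) (hx : H.color x ≠ none)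
    (h : H.IsLabelling (g + Pi.single x 1)) : g + Pi.single x 1 ∈ H.labellings f := by
  refine ⟨h, fun e he => ?_⟩
  have hex : e ≠ x := by rintro rfl; exact hx he
  rw [Pi.add_apply, Pi.single_eq_of_ne hex, add_zero, hg.2 e he]

theorem sub_single_mem_labellings (hg : g ∈ H.labellings f) (hx : H.color x ≠ none)
    (h : H.IsLabelling (g - Pi.single x 1)) : g - Pi.single x 1 ∈ H.labellings f := by
  refine ⟨h, fun e he => ?_⟩
  have hex : e ≠ x := by rintro rfl; exact hx he
  rw [Pi.sub_apply, Pi.single_eq_of_ne hex, sub_zero, hg.2 e he]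

theorem sup_eq_and_inf_eq_of_add_single_eq (hxy : x ≠ y)
    (h : g + Pi.single y 1 = g' + Pi.single x 1) :
    g ⊔ g' = g + Pi.single y 1 ∧ g ⊓ g' = g - Pi.single x 1 := by
  have pointwise (e : E) := congrFun h e
  simp only [Pi.add_apply, Pi.single_apply] at pointwise
  constructor <;> funext e <;> specialize pointwise e <;>
    simp only [Pi.add_apply, Pi.sub_apply, Pi.sup_apply, Pi.inf_apply, Pi.single_apply] <;> grind

/-- The labelling `s` is obtained from `r` by raising the label at `x` by one. -/
def Raises (Φ : T ≃ H.labellings f) (x : E) (r s : T) : Prop :=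
  (Φ s).1 = (Φ r).1 + Pi.single x 1

variable {Φ : T ≃ H.labellings f} {r s t u : T}

omit [DecidableEq E] in
theorem color_ne_none_of_apply_eq_add_one (h : (Φ s).1 x = (Φ r).1 x + 1) : H.color x ≠ none :=
  fun hx => (lt_add_one _).ne (((Φ r).2.2 x hx).trans ((Φ s).2.2 x hx).symm |>.trans h)

theorem Raises.apply_self (h : Raises Φ x r s) : (Φ s).1 x = (Φ r).1 x + 1 := by
  rw [h, Pi.add_apply, Pi.single_eq_same]

theorem Raises.color_ne_none (h : Raises Φ x r s) : H.color x ≠ none :=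
  color_ne_none_of_apply_eq_add_one h.apply_self

theorem Raises.eq_left (h : Raises Φ x r s) (h' : Raises Φ x t s) : r = t :=
  Φ.injective (Subtype.ext (add_right_cancel (h.symm.trans h')))

theorem Raises.eq_right (h : Raises Φ x r s) (h' : Raises Φ x r t) : s = t :=
  Φ.injective (Subtype.ext (h.trans h'.symm))

theorem Raises.eq_of_raises (h : Raises Φ x r s) (h' : Raises Φ y r s) : x = y := by
  by_contra hxy
  have := h.apply_self
  rw [h', Pi.add_apply, Pi.single_eq_of_ne hxy] at this
  lia

theorem exists_raises (hx : H.color x ≠ none) (h : H.IsLabelling ((Φ r).1 + Pi.single x 1)) :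
    ∃ s, Raises Φ x r s := by
  obtain ⟨s, hs⟩ := Φ.surjective ⟨_, add_single_mem_labellings (Φ r).2 hx h⟩
  exact ⟨s, congrArg Subtype.val hs⟩

theorem exists_raises_left (hx : H.color x ≠ none) (h : H.IsLabelling ((Φ s).1 - Pi.single x 1)) :
    ∃ r, Raises Φ x r s := by
  obtain ⟨r, hr⟩ := Φ.surjective ⟨_, sub_single_mem_labellings (Φ s).2 hx h⟩
  exact ⟨r, by rw [Raises, hr, sub_add_cancel]⟩

/-- The labellings and one-step raisings form a diamond: `r` and `s` have an infimum and a
supremum at distance one. -/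
theorem exists_diamond (hxy : x ≠ y)
    (h : (Φ s).1 + Pi.single y 1 = (Φ r).1 + Pi.single x 1) :
    ∃ t u, Raises Φ x t s ∧ Raises Φ y t r ∧ Raises Φ y s u ∧ Raises Φ x r u := by
  obtain ⟨sup_eq, inf_eq⟩ := sup_eq_and_inf_eq_of_add_single_eq hxy h
  have label_x := congrFun h x
  have label_y := congrFun h y
  rw [Pi.add_apply, Pi.add_apply, Pi.single_eq_same, Pi.single_eq_of_ne hxy, add_zero] at label_x
  rw [Pi.add_apply, Pi.add_apply, Pi.single_eq_same, Pi.single_eq_of_ne hxy.symm, add_zero]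
    at label_y
  have hx : H.color x ≠ none := color_ne_none_of_apply_eq_add_one label_x
  have hy : H.color y ≠ none := color_ne_none_of_apply_eq_add_one label_y.symm
  obtain ⟨u, hu⟩ := exists_raises hy (sup_eq ▸ (Φ s).2.1.sup (Φ r).2.1)
  obtain ⟨t, ht⟩ := exists_raises_left hx (inf_eq ▸ (Φ s).2.1.inf (Φ r).2.1)
  refine ⟨t, u, ht, ?_, hu, hu.trans h⟩
  rw [Raises] at ht ⊢
  rw [ht, add_right_comm] at h
  exact (add_right_cancel h).symm

variable [Fintype E] [DecidableEq N] [DecidableRel G.Adj]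

instance : Decidable (Raises Φ x r s) :=
  inferInstanceAs (Decidable ((Φ s).1 = (Φ r).1 + Pi.single x 1))

/-- The matrix of the operator raising the label at `x`, on the labellings indexed by `Φ`. -/
def raise (Φ : T ≃ H.labellings f) (x : E) : Matrix T T ℂ :=
  Matrix.of fun s r => if Raises Φ x r s then (√(H.edgeCoeff (Φ r).1 x : ℝ) : ℂ) else 0

theorem Raises.raise_apply (h : Raises Φ x r s) :
    raise Φ x s r = (√(H.edgeCoeff (Φ r).1 x : ℝ) : ℂ) := if_pos h

theorem raises_of_raise_apply_ne_zero (h : raise Φ x s r ≠ 0) : Raises Φ x r s :=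
  (ite_ne_right_iff.mp h).1

theorem raise_apply_eq_zero (h : ¬Raises Φ x r s) : raise Φ x s r = 0 := if_neg h

variable {β : E → Bool → E} (hβ : ∀ i, H.IsInterlacing (some i) β)

include hβ in
theorem Raises.edgeCoeff_pos (h : Raises Φ x r s) : 0 < H.edgeCoeff (Φ r).1 x := by
  obtain ⟨i, hi⟩ := Option.ne_none_iff_exists.mp h.color_ne_none
  exact ColoredHeap.edgeCoeff_pos (hβ i) (mem_colorClass.mpr hi.symm) (Φ r).2.1 (h ▸ (Φ s).2.1)

variable [Fintype T]

theorem Raises.raise_mul_transpose_apply (h : Raises Φ x t s) :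
    (raise Φ x * (raise Φ y).transpose) s r = raise Φ x s t * raise Φ y r t := by
  rw [Matrix.mul_apply]
  refine Finset.sum_eq_single t (fun t' _ hne => ?_) fun h => absurd (Finset.mem_univ t) h
  rw [raise_apply_eq_zero fun h' => hne (h'.eq_left h), zero_mul]

theorem Raises.transpose_mul_raise_apply (h : Raises Φ y s u) :
    ((raise Φ y).transpose * raise Φ x) s r = raise Φ y u s * raise Φ x u r := by
  rw [Matrix.mul_apply]
  refine Finset.sum_eq_single u (fun u' _ hne => ?_) fun h => absurd (Finset.mem_univ u) h
  rw [Matrix.transpose_apply, raise_apply_eq_zero fun h' => hne (h'.eq_right h), zero_mul]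

include hβ

theorem raise_mul_transpose_raise_of_ne (hxy : x ≠ y) :
    raise Φ x * (raise Φ y).transpose = (raise Φ y).transpose * raise Φ x := by
  ext s r
  by_cases h : (Φ s).1 + Pi.single y 1 = (Φ r).1 + Pi.single x 1
  · obtain ⟨t, u, hts, htr, hsu, hru⟩ := exists_diamond hxy h
    have coeff_mul := edgeCoeff_mul_edgeCoeff (H := H) (g := (Φ t).1) hxy
    rw [← hts, ← htr] at coeff_mul
    rw [hts.raise_mul_transpose_apply, hsu.transpose_mul_raise_apply, hts.raise_apply,
      htr.raise_apply, hsu.raise_apply, hru.raise_apply, ← Complex.ofReal_mul,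
      ← Complex.ofReal_mul, ← Real.sqrt_mul (by exact_mod_cast (hts.edgeCoeff_pos hβ).le),
      ← Real.sqrt_mul (by exact_mod_cast (hsu.edgeCoeff_pos hβ).le), ← Rat.cast_mul,
      ← Rat.cast_mul, coeff_mul]
  · rw [Matrix.mul_apply, Matrix.mul_apply, Finset.sum_eq_zero, Finset.sum_eq_zero]
    · intro u _
      by_contra hne
      have hsu := raises_of_raise_apply_ne_zero (left_ne_zero_of_mul hne)
      exact h (hsu.symm.trans (raises_of_raise_apply_ne_zero (right_ne_zero_of_mul hne)))
    · intro t _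
      by_contra hne
      have hts := raises_of_raise_apply_ne_zero (left_ne_zero_of_mul hne)
      have htr := raises_of_raise_apply_ne_zero (right_ne_zero_of_mul hne)
      rw [hts, htr, add_right_comm] at h
      exact h rfl

variable [DecidableEq T]

theorem raise_mul_transpose_raise_self (hx : H.color x ≠ none) :
    raise Φ x * (raise Φ x).transpose =
      Matrix.diagonal fun s => (H.edgeCoeff ((Φ s).1 - Pi.single x 1) x : ℂ) := by
  ext s r
  by_cases h : H.IsLabelling ((Φ s).1 - Pi.single x 1)
  · obtain ⟨t, hts⟩ := exists_raises_left hx h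
    rw [hts.raise_mul_transpose_apply]
    rcases eq_or_ne s r with rfl | hsr
    · have coeff_pos := hts.edgeCoeff_pos hβ
      rw [Matrix.diagonal_apply_eq, hts.raise_apply, ← Complex.ofReal_mul,
        Real.mul_self_sqrt (by exact_mod_cast coeff_pos.le), hts, add_sub_cancel_right,
        Complex.ofReal_ratCast]
    · rw [Matrix.diagonal_apply_ne _ hsr, raise_apply_eq_zero fun htr => hsr (hts.eq_right htr),
        mul_zero]
  · have no_lower (t : T) : ¬Raises Φ x t s := fun hts =>
      h (by rw [hts, add_sub_cancel_right]; exact (Φ t).2.1)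
    rw [Matrix.mul_apply, Finset.sum_eq_zero fun t _ => by
      rw [raise_apply_eq_zero (no_lower t), zero_mul], Matrix.diagonal_apply,
      edgeCoeff_sub_single_eq_zero (Φ s).2.1 h, Rat.cast_zero, ite_self]

theorem transpose_raise_mul_raise_self (hx : H.color x ≠ none) :
    (raise Φ x).transpose * raise Φ x =
      Matrix.diagonal fun s => (H.edgeCoeff (Φ s).1 x : ℂ) := by
  ext s r
  by_cases h : H.IsLabelling ((Φ s).1 + Pi.single x 1)
  · obtain ⟨u, hsu⟩ := exists_raises hx h
    rw [hsu.transpose_mul_raise_apply]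
    rcases eq_or_ne s r with rfl | hsr
    · have coeff_pos := hsu.edgeCoeff_pos hβ
      rw [Matrix.diagonal_apply_eq, hsu.raise_apply, ← Complex.ofReal_mul,
        Real.mul_self_sqrt (by exact_mod_cast coeff_pos.le), Complex.ofReal_ratCast]
    · rw [Matrix.diagonal_apply_ne _ hsr, raise_apply_eq_zero fun hru => hsr (hsu.eq_left hru),
        mul_zero]
  · have no_upper (u : T) : ¬Raises Φ x s u := fun hsu => h (by rw [← hsu]; exact (Φ u).2.1)
    rw [Matrix.mul_apply, Finset.sum_eq_zero fun u _ => by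
      rw [Matrix.transpose_apply, raise_apply_eq_zero (no_upper u), zero_mul],
      Matrix.diagonal_apply, edgeCoeff_eq_zero (Φ s).2.1 h, Rat.cast_zero, ite_self]

/-- The sum of the operators raising the elements of colour `i`. -/
def raiseColor (Φ : T ≃ H.labellings f) (i : N) : Matrix T T ℂ :=
  ∑ x ∈ H.colorClass (some i), raise Φ x

theorem raiseColor_mul_transpose_sub (i j : N) :
    raiseColor Φ i * (raiseColor Φ j).transpose - (raiseColor Φ j).transpose * raiseColor Φ i =
      if i = j then Matrix.diagonal fun s => (H.weight (some i) (Φ s).1 : ℂ) else 0 := by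
  have color_ne_none {x} {k : N} (hx : x ∈ H.colorClass (some k)) : H.color x ≠ none := by
    rw [mem_colorClass.mp hx]
    exact Option.some_ne_none k
  have expand : raiseColor Φ i * (raiseColor Φ j).transpose -
      (raiseColor Φ j).transpose * raiseColor Φ i =
        ∑ x ∈ H.colorClass (some i), ∑ y ∈ H.colorClass (some j),
          (raise Φ x * (raise Φ y).transpose - (raise Φ y).transpose * raise Φ x) := by
    simp only [raiseColor, Matrix.transpose_sum, Finset.sum_mul_sum, Finset.sum_sub_distrib]
    rw [Finset.sum_comm (s := H.colorClass (some j))]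
  have commute {x y} (hxy : x ≠ y) :
      raise Φ x * (raise Φ y).transpose - (raise Φ y).transpose * raise Φ x = 0 :=
    sub_eq_zero.mpr (raise_mul_transpose_raise_of_ne hβ hxy)
  rw [expand]
  split_ifs with hij
  · subst hij
    have diagonal_eq : ∀ x ∈ H.colorClass (some i), ∑ y ∈ H.colorClass (some i),
        (raise Φ x * (raise Φ y).transpose - (raise Φ y).transpose * raise Φ x) =
          Matrix.diagonal fun s => ((H.edgeCoeff ((Φ s).1 - Pi.single x 1) x -
            H.edgeCoeff (Φ s).1 x : ℚ) : ℂ) := fun x hx => by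
      rw [Finset.sum_eq_single_of_mem x hx fun y _ hyx => commute hyx.symm,
        raise_mul_transpose_raise_self hβ (color_ne_none hx),
        transpose_raise_mul_raise_self hβ (color_ne_none hx), Matrix.diagonal_sub]
      simp only [Rat.cast_sub]
    rw [Finset.sum_congr rfl diagonal_eq]
    ext s r
    rw [Matrix.sum_apply]
    rcases eq_or_ne s r with rfl | hsr
    · simp only [Matrix.diagonal_apply_eq]
      rw [← Rat.cast_sum, sum_edgeCoeff_sub_edgeCoeff (hβ i) (Φ s).2.1, Rat.cast_intCast]
    · simp only [Matrix.diagonal_apply_ne _ hsr, Finset.sum_const_zero]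
  · refine Finset.sum_eq_zero fun x hx => Finset.sum_eq_zero fun y hy => commute ?_
    rintro rfl
    exact hij (Option.some_injective N ((mem_colorClass.mp hx).symm.trans (mem_colorClass.mp hy)))

end ColoredHeap

/-! ### The module of a lattice of labellings -/

namespace ColoredHeap

open CL

variable {N : Type} [DecidableEq N] {adj : N → N → Prop} {pos : Finset (N × ℕ)} {k : ℕ}
  {extra : ({x : N × ℕ // x ∈ pos} → ℕ) → Prop} {E : Type*} [DecidableEq E]
  {G : SimpleGraph (Option N)} {H : ColoredHeap G E} {m : E → ℤ}
  {Φ : Elt adj pos k extra ≃ H.labellings m} {i j : N} {r s t : Elt adj pos k extra} {x y : E}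

/-- Under `Φ`, the edges of colour `i` are the raisings of the labels of colour `i`. -/
def RespectsEdges (Φ : Elt adj pos k extra ≃ H.labellings m) : Prop :=
  ∀ i r s, edge i r s ↔ ∃ x, H.color x = some i ∧ Raises Φ x r s

section Coefficients

variable [Fintype E] [DecidableRel G.Adj]

/-- The coefficient `P_e` of the edge from `r` to `s`. -/
def squaredCoeff (Φ : Elt adj pos k extra ≃ H.labellings m) (r s : Elt adj pos k extra) : ℚ :=
  ∑ x, if Raises Φ x r s then H.edgeCoeff (Φ r).1 x else 0

theorem Raises.squaredCoeff_eq (h : Raises Φ x r s) :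
    squaredCoeff Φ r s = H.edgeCoeff (Φ r).1 x := by
  rw [squaredCoeff, Finset.sum_eq_single_of_mem x (Finset.mem_univ x), if_pos h]
  exact fun y _ hyx => if_neg fun h' => hyx (Raises.eq_of_raises h' h)

variable (hΦ : RespectsEdges Φ)

include hΦ

theorem edgeMatrix_squaredCoeff : edgeMatrix (squaredCoeff Φ) i = raiseColor Φ i := by
  ext s r
  rw [edgeMatrix, Matrix.of_apply, raiseColor, Matrix.sum_apply]
  split_ifs with h
  · obtain ⟨x, hx, hrs⟩ := (hΦ i r s).mp h
    rw [Finset.sum_eq_single_of_mem x (mem_colorClass.mpr hx) fun y _ hyx =>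
      raise_apply_eq_zero fun h' => hyx (h'.eq_of_raises hrs), hrs.raise_apply, hrs.squaredCoeff_eq]
  · exact (Finset.sum_eq_zero fun x hx => raise_apply_eq_zero fun h' =>
      h ((hΦ i r s).mpr ⟨x, mem_colorClass.mp hx, h'⟩)).symm

theorem weight_eq_of_edge (h : edge i r s) : H.weight (some j) (Φ s).1 =
    H.weight (some j) (Φ r).1 + if j = i then 2 else if G.Adj (some j) (some i) then -1 else 0 := by
  obtain ⟨x, hx, hrs⟩ := (hΦ i r s).mp h
  rw [hrs, weight_add_single, hx]
  simp only [Option.some_inj]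

variable {β : E → Bool → E} (hβ : ∀ i, H.IsInterlacing (some i) β)

include hβ

theorem squaredCoeff_pos (h : edge i r s) : 0 < squaredCoeff Φ r s := by
  obtain ⟨x, -, hrs⟩ := (hΦ i r s).mp h
  exact hrs.squaredCoeff_eq ▸ hrs.edgeCoeff_pos hβ

theorem lie_opX_opY (i j : N) : ⁅opX (squaredCoeff Φ) i, opY (squaredCoeff Φ) j⁆ =
    if i = j then (Matrix.diagonal fun t => (H.weight (some i) (Φ t).1 : ℂ)).mulVecLin else 0 := by
  rw [opX_eq_mulVecLin, opY_eq_mulVecLin, lie_mulVecLin, edgeMatrix_squaredCoeff hΦ,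
    edgeMatrix_squaredCoeff hΦ, raiseColor_mul_transpose_sub hβ]
  split_ifs
  · rfl
  · exact Matrix.mulVecLin_zero

theorem mwt_eq_weight (i : N) (t : Elt adj pos k extra) :
    mwt i t = H.weight (some i) (Φ t).1 := by
  refine mwt_eq_of_lie_eq_diagonal (P := squaredCoeff Φ)
    (w := fun t => H.weight (some i) (Φ t).1) (fun r s h => ?_) ?_
  · rw [weight_eq_of_edge hΦ h, if_pos rfl]
  · rw [lie_opX_opY hΦ hβ, if_pos rfl]

variable {A : N → N → ℤ}
  (hA : ∀ i j, A i j = if i = j then 2 else if G.Adj (some i) (some j) then -1 else 0)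

include hA

theorem isCartanTriple :
    IsCartanTriple A (opX (squaredCoeff Φ)) (opY (squaredCoeff Φ)) opH := by
  have mwt_of_edge {i j} {r s : Elt adj pos k extra} (h : edge j r s) :
      mwt i s = mwt i r + A j i := by
    rw [mwt_eq_weight hΦ hβ, mwt_eq_weight hΦ hβ, weight_eq_of_edge hΦ h, hA]
    simp only [eq_comm (a := i), G.adj_comm (some i)]
  refine ⟨fun i j => ?_, fun i => ?_, fun i j hij => ?_, fun i j => ?_, fun i j => ?_⟩
  · rw [opH, opH, lie_mulVecLin, Matrix.diagonal_mul_diagonal, Matrix.diagonal_mul_diagonal]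
    simp only [mul_comm, sub_self, Matrix.mulVecLin_zero]
  · rw [lie_opX_opY hΦ hβ, if_pos rfl, opH]
    simp only [mwt_eq_weight hΦ hβ]
  · rw [lie_opX_opY hΦ hβ, if_neg hij]
  · refine (lie_diagonal_mulVecLin (c := (A j i : ℂ)) fun s r hsr => ?_).trans
      (Int.cast_smul_eq_zsmul ℂ _ (opX (squaredCoeff Φ) j))
    rw [mwt_of_edge (edge_of_edgeMatrix_ne_zero hsr), Int.cast_add]
  · refine (lie_diagonal_mulVecLin (c := -(A j i : ℂ)) fun s r hsr => ?_).trans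
      ((neg_smul _ _).trans
        (congrArg Neg.neg (Int.cast_smul_eq_zsmul ℂ _ (opY (squaredCoeff Φ) j))))
    rw [mwt_of_edge (edge_of_edgeMatrix_ne_zero hsr), Int.cast_add, add_neg_cancel_right]

theorem exists_lieHom_gLie : ∃ φ : gLie A →ₗ⁅ℂ⁆ Module.End ℂ (Elt adj pos k extra → ℂ),
    ∀ i, φ (px A i) = opX (squaredCoeff Φ) i ∧ φ (py A i) = opY (squaredCoeff Φ) i ∧
      φ (ph A i) = opH i := by
  refine (isCartanTriple hΦ hβ hA).exists_lieHom (fun i => ?_) fun i j hij => ?_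
  · rw [hA, if_pos rfl]
  · rw [hA, if_neg hij]
    split_ifs <;> lia

end Coefficients

section Irreducibility

/-- The labelling `m` dominates the labellings with the same frozen values, and its labels on two
elements of equal colour differ only if the lower one is blocked. -/
structure IsHighest (H : ColoredHeap G E) (m : E → ℤ) : Prop where
  isLabelling : H.IsLabelling m
  exists_step_le : ∀ x, H.color x ≠ none → ∃ w, H.Step w x ∧ m w ≤ m x
  exists_step_eq : ∀ x y, H.color x ≠ none → H.color x = H.color y → H.rank x < H.rank y →
    ∃ w, H.Step x w ∧ m w = m x

variable {g : E → ℤ}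

omit [DecidableEq N] [DecidableEq E] in
theorem IsHighest.le (hm : H.IsHighest m) (hg : g ∈ H.labellings m) : g ≤ m := by
  intro x
  induction hn : H.rank x using Nat.strong_induction_on generalizing x with
  | _ n ih =>
    by_cases hx : H.color x = none
    · exact (hg.2 x hx).le
    · obtain ⟨w, hwx, label_le⟩ := hm.exists_step_le x hx
      exact (hg.1 hwx).trans ((ih _ (by have := hwx.2; lia) w rfl).trans label_le)

omit [DecidableEq N] in
/-- An element of least rank at which a labelling is not maximal can be raised. -/
theorem IsHighest.exists_isLabelling_add_single (hm : H.IsHighest m) (hg : g ∈ H.labellings m)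
    (hne : g ≠ m) : ∃ x, H.color x ≠ none ∧ H.IsLabelling (g + Pi.single x 1) ∧
      ∀ w, H.rank w < H.rank x → g w = m w := by
  obtain ⟨x, hx, hmin⟩ := (measure H.rank).wf.has_min {x | g x ≠ m x} (Function.ne_iff.mp hne)
  have eq_below (w : E) (hw : H.rank w < H.rank x) : g w = m w := by
    by_contra hgw
    exact hmin w hgw hw
  refine ⟨x, fun h => hx (hg.2 x h), ?_, eq_below⟩
  by_contra hnot
  obtain ⟨u, hux, label_eq⟩ := hg.1.exists_step_of_not_add_single hnot
  refine hx (le_antisymm (hm.le hg x) ?_)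
  rw [label_eq, eq_below u (by have := hux.2; lia)]
  exact hm.isLabelling hux

omit [DecidableEq N] in
theorem IsHighest.rank_lt_of_raises (hm : H.IsHighest m) {r' : Elt adj pos k extra}
    (hbelow : ∀ w, H.rank w < H.rank x → (Φ r).1 w = m w) (hx : Raises Φ x r s)
    (hy : Raises Φ y r' s) (hyx : y ≠ x) (hc : H.color y = H.color x) :
    H.rank x < H.rank y := by
  refine (rank_ne (.inl hc) hyx).lt_or_gt.resolve_left fun hr => ?_
  obtain ⟨w, hyw, label_eq⟩ := hm.exists_step_eq y x hy.color_ne_none hc hr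
  have rank_gap := rank_add_two_le hc hr
  have rank_w := hyw.2
  have hwx : w ≠ x := by rintro rfl; lia
  have hwy : w ≠ y := by rintro rfl; lia
  have same : (Φ r).1 + Pi.single x 1 = (Φ r').1 + Pi.single y 1 := hx.symm.trans hy
  have at_y := congrFun same y
  have at_w := congrFun same w
  rw [Pi.add_apply, Pi.add_apply, Pi.single_eq_of_ne hyx, Pi.single_eq_same, hbelow y hr] at at_y
  rw [Pi.add_apply, Pi.add_apply, Pi.single_eq_of_ne hwx, Pi.single_eq_of_ne hwy,
    hbelow w (by lia)] at at_w
  have := (Φ r').2.1 hyw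
  lia

/-- The labels weighted by the ranks of the elements. -/
def rankSum [Fintype E] (H : ColoredHeap G E) (g : E → ℤ) : ℤ := ∑ e, g e * H.rank e

omit [DecidableEq N] in
theorem Raises.rankSum_eq [Fintype E] (h : Raises Φ x r s) :
    H.rankSum (Φ s).1 = H.rankSum (Φ r).1 + H.rank x := by
  have label_eq : (Φ s).1 = (Φ r).1 + Pi.single x 1 := h
  simp only [rankSum, label_eq, Pi.add_apply, add_mul, Finset.sum_add_distrib, Pi.single_apply,
    ite_mul, one_mul, zero_mul, Finset.sum_ite_eq', Finset.mem_univ, if_true]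

variable {P : Elt adj pos k extra → Elt adj pos k extra → ℚ}

/-- A labelling of least weighted rank in the support of `v`, if it is not `m`, has a raising whose
coefficient in `X_i v` receives no other contribution. -/
theorem eq_zero_of_forall_opX_eq_zero [Finite E] (hm : H.IsHighest m) (hΦ : RespectsEdges Φ)
    (hP : ∀ r s, (∃ i, edge i r s) → 0 < P r s) (ht : (Φ t).1 = m) {v : Elt adj pos k extra → ℂ}
    (hX : ∀ i, opX P i v = 0) (hv : v t = 0) : v = 0 := by
  cases nonempty_fintype E
  by_contra hne
  obtain ⟨t', ht'⟩ := Function.ne_iff.mp hne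
  obtain ⟨r, hr, hmin⟩ := Finset.exists_min_image {r | v r ≠ 0} (fun r => H.rankSum (Φ r).1)
    ⟨t', Finset.mem_filter_univ t' |>.mpr ht'⟩
  rw [Finset.mem_filter_univ] at hr
  have label_ne : (Φ r).1 ≠ m := fun h =>
    hr (Φ.injective (Subtype.ext (h.trans ht.symm)) ▸ hv)
  obtain ⟨x, hx, labelling_x, hbelow⟩ := hm.exists_isLabelling_add_single (Φ r).2 label_ne
  obtain ⟨i, hi⟩ := Option.ne_none_iff_exists.mp hx
  obtain ⟨s, hrs⟩ := exists_raises hx labelling_x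
  have edge_rs : edge i r s := (hΦ i r s).mpr ⟨x, hi.symm, hrs⟩
  obtain ⟨r', hr', edge_r's, hvr'⟩ :=
    exists_ne_edge_apply_ne_zero (hP r s ⟨i, edge_rs⟩) edge_rs (congrFun (hX i) s) hr
  obtain ⟨y, hy, hr's⟩ := (hΦ i r' s).mp edge_r's
  have hyx : y ≠ x := by
    rintro rfl
    exact hr' (hr's.eq_left hrs)
  have rank_lt := hm.rank_lt_of_raises hbelow hrs hr's hyx (hy.trans hi)
  have := hmin r' ((Finset.mem_filter_univ r').mpr hvr')
  have := hrs.rankSum_eq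
  have := hr's.rankSum_eq
  lia

theorem opX_highest (hm : H.IsHighest m) (hΦ : RespectsEdges Φ) (ht : (Φ t).1 = m) (i : N) :
    opX P i (Pi.single t 1) = 0 := by
  refine opX_single fun s hts => ?_
  obtain ⟨x, -, hx⟩ := (hΦ i t s).mp hts
  have := hm.le (Φ s).2 x
  rw [hx.apply_self, ht] at this
  lia

theorem eq_bot_or_eq_top_of_invariant [Finite E] (hm : H.IsHighest m) (hΦ : RespectsEdges Φ)
    (hP : ∀ r s, (∃ i, edge i r s) → 0 < P r s)
    {U : Submodule ℂ (Elt adj pos k extra → ℂ)} (hX : ∀ i, ∀ v ∈ U, opX P i v ∈ U)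
    (hY : ∀ i, ∀ v ∈ U, opY P i v ∈ U) : U = ⊥ ∨ U = ⊤ := by
  obtain ⟨t, ht⟩ := Φ.surjective ⟨m, hm.isLabelling, fun _ _ => rfl⟩
  have ht' : (Φ t).1 = m := congrArg Subtype.val ht
  exact eq_bot_or_eq_top_of_opX_mem_of_opY_mem (opX_highest hm hΦ ht')
    (fun v hv hvt => eq_zero_of_forall_opX_eq_zero hm hΦ hP ht' hv hvt) hX hY

end Irreducibility

end ColoredHeap

/-! ### The minuscule heap of type `E₇` -/

/-- The elements of the minuscule heap of type `E₇`: the positions of `P24`, and three elements to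
be labelled by the constants `a + b`, `a` and `0`. -/
abbrev HeapE7 : Type := {x : N6 × ℕ // x ∈ pos24} ⊕ Fin 3

namespace HeapE7

/-- The nodes of the Dynkin diagram of type `E₇`, the node adjacent to `m1` being `none`, drawn in
the plane in such a way that the distance of nodes in the diagram is their `ℓ¹`-distance. -/
def coord : Option N6 → ℤ × ℤ
  | none => (-3, 0)
  | some m1 => (-2, 0)
  | some m2 => (-1, 0)
  | some m3 => (0, 0)
  | some m4 => (0, 1)
  | some m5 => (1, 0)
  | some m6 => (2, 0)

/-- The distance of two nodes in the Dynkin diagram of type `E₇`. -/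
def nodeDist (c d : Option N6) : ℕ :=
  ((coord c).1 - (coord d).1).natAbs + ((coord c).2 - (coord d).2).natAbs

/-- The Dynkin diagram of type `E₇`. -/
def diagram : SimpleGraph (Option N6) where
  Adj c d := nodeDist c d = 1
  symm := ⟨by decide⟩
  loopless := ⟨by decide⟩

instance : DecidableRel diagram.Adj := fun c d => inferInstanceAs (Decidable (nodeDist c d = 1))

theorem adj_some_iff : ∀ i j, diagram.Adj (some i) (some j) ↔ adj6 i j := by decide

/-- The colour of an element. -/
def color : HeapE7 → Option N6 := Sum.elim (fun x => some x.1.1) fun _ => none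

/-- The rank of an element; the ranks in `P24` are shifted by one to make room for an element of
rank `0`. -/
def rank : HeapE7 → ℕ := Sum.elim (fun x => x.1.2 + 1) ![0, 8, 16]

/-- The cone above `u`, which turns out to be its up-set. -/
def InCone (u v : HeapE7) : Prop := rank u + nodeDist (color u) (color v) ≤ rank v

instance : DecidableRel InCone := fun _ _ => Nat.decLe _ _

theorem InCone.reflTransGen {u v : HeapE7} (h : InCone u v) : Relation.ReflTransGen
    (fun u v => diagram.Adj (color u) (color v) ∧ rank v = rank u + 1) u v := by
  have exists_step : ∀ u v : HeapE7, InCone u v → u = v ∨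
      ∃ w, (diagram.Adj (color u) (color w) ∧ rank w = rank u + 1) ∧ InCone w v := by
    decide +kernel
  induction hn : rank v - rank u generalizing u with
  | zero =>
    obtain rfl | ⟨w, huw, hwv⟩ := exists_step u v h
    · exact .refl
    · have : rank w ≤ rank v := (Nat.le_add_right _ _).trans hwv
      lia
  | succ n ih =>
    obtain rfl | ⟨w, huw, hwv⟩ := exists_step u v h
    · exact .refl
    · exact .head huw (ih hwv (by lia))

end HeapE7

/-- The minuscule heap of type `E₇`. -/
def heapE7 : ColoredHeap HeapE7.diagram HeapE7 where
  color := HeapE7.color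
  rank := HeapE7.rank
  comparable u v huv hc := by
    have inCone_or_inCone : ∀ u v : HeapE7, (HeapE7.color u = HeapE7.color v ∨
        HeapE7.diagram.Adj (HeapE7.color u) (HeapE7.color v)) →
        HeapE7.InCone u v ∨ HeapE7.InCone v u := by
      decide +kernel
    refine (inCone_or_inCone u v hc).imp (fun h => ?_) fun h => ?_
    · exact (Relation.reflTransGen_iff_eq_or_transGen.mp h.reflTransGen).resolve_left huv.symm
    · exact (Relation.reflTransGen_iff_eq_or_transGen.mp h.reflTransGen).resolve_left huv

namespace HeapE7

open CL

instance : DecidableRel heapE7.Step := fun _ _ => inferInstanceAs (Decidable (_ ∧ _))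

/-- The lower partner of `x` is its leftmost lower cover and the upper partner is its rightmost
upper cover. -/
def IsPartner (x : HeapE7) : Bool → HeapE7 → Prop
  | true, y => heapE7.Step y x ∧
      ∀ z, heapE7.Step z x → (coord (color y)).1 ≤ (coord (color z)).1
  | false, y => heapE7.Step x y ∧
      ∀ z, heapE7.Step x z → (coord (color z)).1 ≤ (coord (color y)).1

instance (x : HeapE7) : ∀ b y, Decidable (IsPartner x b y)
  | true, _ => inferInstanceAs (Decidable (_ ∧ _))
  | false, _ => inferInstanceAs (Decidable (_ ∧ _))

theorem exists_isInterlacing : ∃ β, ∀ i, heapE7.IsInterlacing (some i) β := by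
  have exists_partner : ∀ x b, ∃ y, color x ≠ none → IsPartner x b y := by decide +kernel
  have partner_unique : ∀ x b y y', IsPartner x b y → IsPartner x b y' → y = y' := by
    decide +kernel
  have exists_isPartner : ∀ i y, diagram.Adj (some i) (color y) →
      ∃ x b, color x = some i ∧ IsPartner x b y := by
    decide +kernel
  have isPartner_unique : ∀ x b x' b' y, color x = color x' → IsPartner x b y →
      IsPartner x' b' y → x = x' ∧ b = b' := by
    decide +kernel
  choose β hβ using exists_partner
  have ne_none {x i} (hx : color x = some i) : color x ≠ none := by
    rw [hx]
    exact Option.some_ne_none i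
  refine ⟨β, fun i => ⟨fun x hx => (hβ x true (ne_none hx)).1,
    fun x hx => (hβ x false (ne_none hx)).1, fun y hy => ?_⟩⟩
  obtain ⟨x, b, hx, hxy⟩ := exists_isPartner i y hy
  refine ⟨(x, b), ⟨hx, partner_unique x b _ _ (hβ x b (ne_none hx)) hxy⟩, ?_⟩
  rintro ⟨x', b'⟩ ⟨hx', rfl⟩
  obtain ⟨rfl, rfl⟩ := isPartner_unique x' b' x b _ (hx'.trans hx.symm)
    (hβ x' b' (ne_none hx')) hxy
  rfl

/-- The indicator function of the complement of the up-set of `inr z`. -/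
def notAbove (z : Fin 3) (e : HeapE7) : ℤ := if InCone (.inr z) e then 0 else 1

/-- The largest of the labellings with the values `a + b`, `a` and `0` on the elements of colour
`none`. -/
def highest (a b : ℕ) (e : HeapE7) : ℤ := a * notAbove 2 e + b * notAbove 1 e

variable {a b : ℕ}

theorem isHighest_highest : heapE7.IsHighest (highest a b) := by
  have notAbove_le : ∀ u v, heapE7.Step u v → ∀ z, notAbove z v ≤ notAbove z u := by decide +kernel
  have exists_step_le : ∀ x, color x ≠ none →
      ∃ w, heapE7.Step w x ∧ ∀ z ≠ 0, notAbove z w ≤ notAbove z x := by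
    decide +kernel
  have exists_step_eq : ∀ x y, color x ≠ none → color x = color y → rank x < rank y →
      ∃ w, heapE7.Step x w ∧ ∀ z ≠ 0, notAbove z w = notAbove z x := by
    decide +kernel
  have highest_le {u v : HeapE7} (h : ∀ z ≠ 0, notAbove z u ≤ notAbove z v) :
      highest a b u ≤ highest a b v :=
    add_le_add (mul_le_mul_of_nonneg_left (h 2 (by decide)) (Nat.cast_nonneg a))
      (mul_le_mul_of_nonneg_left (h 1 (by decide)) (Nat.cast_nonneg b))
  refine ⟨fun u v huv => highest_le fun z _ => notAbove_le u v huv z, fun x hx => ?_,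
    fun x y hx hc hr => ?_⟩
  · obtain ⟨w, hwx, hw⟩ := exists_step_le x hx
    exact ⟨w, hwx, highest_le hw⟩
  · obtain ⟨w, hxw, hw⟩ := exists_step_eq x y hx hc hr
    exact ⟨w, hxw, (highest_le fun z hz => (hw z hz).le).antisymm
      (highest_le fun z hz => (hw z hz).ge)⟩

theorem weight_highest (i : N6) : heapE7.weight (some i) (highest a b) =
    a * (if i = m1 then 1 else 0) + b * if i = m6 then 1 else 0 := by
  have weight_notAbove : ∀ i, heapE7.weight (some i) (notAbove 2) = (if i = m1 then 1 else 0) ∧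
      heapE7.weight (some i) (notAbove 1) = if i = m6 then 1 else 0 := by
    decide +kernel
  rw [← (weight_notAbove i).1, ← (weight_notAbove i).2]
  simp only [ColoredHeap.weight, highest, Finset.sum_add_distrib, ← Finset.mul_sum]
  ring

theorem highest_inr (z : Fin 3) : highest a b (.inr z) = ![(a + b : ℤ), a, 0] z := by
  have notAbove_inr : ∀ z, notAbove 2 (.inr z) = ![1, 1, 0] z ∧
      notAbove 1 (.inr z) = ![1, 0, 0] z := by
    decide
  rw [highest, (notAbove_inr z).1, (notAbove_inr z).2]
  fin_cases z <;> simp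

/-- The labelling of the whole heap given by an element of `L6(a,b)`. -/
def extend (t : L6ab a b) : HeapE7 → ℤ := Sum.elim (fun x => t.1 x) fun z => highest a b (.inr z)

theorem step_inl_inl {x y : {x : N6 × ℕ // x ∈ pos24}} :
    heapE7.Step (.inl x) (.inl y) ↔ step adj6 pos24 x.1 y.1 := by
  refine (and_congr (adj_some_iff x.1.1 y.1.1) Nat.succ_inj).trans ?_
  rw [step, and_iff_right x.2, and_iff_right y.2]
  rfl

theorem extend_mem_labellings (t : L6ab a b) : extend t ∈ heapE7.labellings (highest a b) := by
  have not_step_inr_inr : ∀ z z', ¬heapE7.Step (.inr z) (.inr z') := by decide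
  have step_inl_inr : ∀ x z, heapE7.Step (.inl x) (.inr z) →
      x = ⟨(m1, 6), by decide⟩ ∧ z = 1 ∨ z = 2 := by
    decide +kernel
  have step_inr_inl : ∀ z x, heapE7.Step (.inr z) (.inl x) →
      z = 0 ∨ z = 1 ∧ x = ⟨(m1, 8), by decide⟩ := by
    decide +kernel
  refine ⟨?_, ?_⟩
  · rintro (x | z) (y | z') h
    · exact Int.ofNat_le.mpr (t.2.2.1 y x (.single (step_inl_inl.mp h)))
    · change highest a b (.inr z') ≤ (t.1 x : ℤ)
      rw [highest_inr]
      obtain ⟨rfl, rfl⟩ | rfl := step_inl_inr x z' h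
      · exact Int.ofNat_le.mpr t.2.2.2.2
      · exact Int.natCast_nonneg _
    · change (t.1 y : ℤ) ≤ highest a b (.inr z)
      rw [highest_inr]
      obtain rfl | ⟨rfl, rfl⟩ := step_inr_inl z y h
      · exact (Int.ofNat_le.mpr (t.2.1 y)).trans_eq (Nat.cast_add a b)
      · exact Int.ofNat_le.mpr t.2.2.2.1
    · exact (not_step_inr_inr z z' h).elim
  · rintro (x | z) he
    · exact (Option.some_ne_none _ he).elim
    · rfl

variable {g : HeapE7 → ℤ}

theorem apply_inr (hg : g ∈ heapE7.labellings (highest a b)) (z : Fin 3) :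
    g (.inr z) = ![(a + b : ℤ), a, 0] z :=
  (hg.2 (.inr z) rfl).trans (highest_inr z)

theorem inl_le_inl_of_ple (hg : heapE7.IsLabelling g) {x y : {x : N6 × ℕ // x ∈ pos24}}
    (h : ple adj6 pos24 y.1 x.1) : g (.inl x) ≤ g (.inl y) := by
  obtain ⟨x, hx⟩ := x
  dsimp only at h
  induction h with
  | refl => exact le_rfl
  | tail _ hp ih => exact (hg (step_inl_inl.mpr hp)).trans (ih hp.1)

theorem inl_mem_Icc (hg : g ∈ heapE7.labellings (highest a b)) (x : {x : N6 × ℕ // x ∈ pos24}) :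
    g (.inl x) ∈ Set.Icc 0 ((a + b : ℕ) : ℤ) := by
  have inCone_inr : ∀ x, InCone (.inl x) (.inr 2) ∧ InCone (.inr 0) (.inl x) := by decide +kernel
  have le_of_inCone {u v : HeapE7} (h : InCone u v) : g v ≤ g u := by
    obtain rfl | h := Relation.reflTransGen_iff_eq_or_transGen.mp h.reflTransGen
    · exact le_rfl
    · exact hg.1.le_of_below h
  have lower := le_of_inCone (inCone_inr x).1
  have upper := le_of_inCone (inCone_inr x).2
  rw [apply_inr hg] at lower upper
  exact ⟨lower, upper.trans_eq (Nat.cast_add a b).symm⟩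

/-- The element of `L6(a,b)` whose labels are those of the labelling `g`. -/
def restrict (g : heapE7.labellings (highest a b)) : L6ab a b where
  val x := (g.1 (.inl x)).toNat
  property := by
    have below : heapE7.Step (.inr 1) (.inl ⟨(m1, 8), by decide⟩) := by decide
    have above : heapE7.Step (.inl ⟨(m1, 6), by decide⟩) (.inr 1) := by decide
    have label_below := g.2.1 below
    have label_above := g.2.1 above
    rw [apply_inr g.2] at label_below label_above
    exact ⟨fun x => Int.toNat_le.mpr (inl_mem_Icc g.2 x).2,
      fun x y h => Int.toNat_le_toNat (inl_le_inl_of_ple g.2.1 h),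
      Int.toNat_le.mpr label_below, (Int.toNat_natCast a).symm.trans_le
        (Int.toNat_le_toNat label_above)⟩

/-- The elements of `L6(a,b)` as labellings of the whole heap. -/
def labellingEquiv (a b : ℕ) : L6ab a b ≃ heapE7.labellings (highest a b) where
  toFun t := ⟨extend t, extend_mem_labellings t⟩
  invFun := restrict
  left_inv _ := rfl
  right_inv g := by
    refine Subtype.ext (funext ?_)
    rintro (x | z)
    · exact Int.toNat_of_nonneg (inl_mem_Icc g.2 x).1
    · exact (g.2.2 (.inr z) rfl).symm

theorem respectsEdges_labellingEquiv : ColoredHeap.RespectsEdges (labellingEquiv a b) := by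
  intro i r s
  constructor
  · rintro ⟨x, rfl, at_x, off_x⟩
    refine ⟨.inl x, rfl, funext ?_⟩
    rintro (y | z)
    · change (s.1 y : ℤ) = r.1 y + (Pi.single (.inl x) 1 : HeapE7 → ℤ) (.inl y)
      rcases eq_or_ne y x with rfl | hyx
      · rw [Pi.single_eq_same, at_x, Nat.cast_succ]
      · rw [Pi.single_eq_of_ne (Sum.inl_injective.ne hyx), off_x y hyx, add_zero]
    · exact (add_zero _).symm
  · rintro ⟨x | z, hx, hrs⟩
    · refine ⟨x, Option.some_injective _ hx, ?_, fun y hyx => ?_⟩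
      · exact Int.ofNat_inj.mp (hrs.apply_self)
      · have := congrFun hrs (.inl y)
        rw [Pi.add_apply, Pi.single_eq_of_ne (Sum.inl_injective.ne hyx), add_zero] at this
        exact Int.ofNat_inj.mp this
    · exact absurd hx.symm (Option.some_ne_none i)

theorem A6_eq (i j : N6) :
    A6 i j = if i = j then 2 else if diagram.Adj (some i) (some j) then -1 else 0 := by
  simp only [A6, adj_some_iff]

/-- The largest element of `L6(a,b)`. -/
def top (a b : ℕ) : L6ab a b :=
  restrict ⟨highest a b, isHighest_highest.isLabelling, fun _ _ => rfl⟩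

theorem labellingEquiv_top : (labellingEquiv a b (top a b)).1 = highest a b :=
  congrArg Subtype.val ((labellingEquiv a b).apply_symm_apply _)

theorem elLe_top (t : L6ab a b) : elLe t (top a b) := fun x => by
  have := isHighest_highest.le (extend_mem_labellings t) (.inl x)
  rw [← labellingEquiv_top] at this
  exact Int.ofNat_le.mp this

theorem opH_top (i : N6) : opH i (Pi.single (top a b) 1) =
    (a * (if i = m1 then 1 else 0) + b * (if i = m6 then 1 else 0) : ℂ) •
      (Pi.single (top a b) 1 : L6ab a b → ℂ) := by
  obtain ⟨β, hβ⟩ := exists_isInterlacing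
  rw [opH_single, ColoredHeap.mwt_eq_weight respectsEdges_labellingEquiv hβ, labellingEquiv_top,
    weight_highest]
  push_cast
  rfl

end HeapE7

/-- Corollary 4.5 for `L6(a,b)`: there is a family of positive rational
edge coefficients on `L6(a,b)` whose square roots define a representation of `𝔤(E₆)`;
any such representation is irreducible with highest weight `aω₁' + bω₆'`. -/
theorem statement_12 (a b : ℕ) :
    ∃ P : L6ab a b → L6ab a b → ℚ,
      (∀ r s : L6ab a b, (∃ i, CL.edge i r s) → 0 < P r s) ∧
      (∃ φ : CL.gLie A6 →ₗ⁅ℂ⁆ Module.End ℂ (L6ab a b → ℂ),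
        ∀ i : N6, φ (CL.px A6 i) = CL.opX P i ∧ φ (CL.py A6 i) = CL.opY P i ∧
          φ (CL.ph A6 i) = CL.opH i) ∧
      ∀ P' : L6ab a b → L6ab a b → ℚ,
        (∀ r s : L6ab a b, (∃ i, CL.edge i r s) → 0 < P' r s) →
        ∀ φ : CL.gLie A6 →ₗ⁅ℂ⁆ Module.End ℂ (L6ab a b → ℂ),
          (∀ i : N6, φ (CL.px A6 i) = CL.opX P' i ∧ φ (CL.py A6 i) = CL.opY P' i ∧
            φ (CL.ph A6 i) = CL.opH i) →
          (∀ U : Submodule ℂ (L6ab a b → ℂ), (∀ g : CL.gLie A6, ∀ v ∈ U, φ g v ∈ U) →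
            U = ⊥ ∨ U = ⊤) ∧
          ∃ tmax : L6ab a b, (∀ t : L6ab a b, CL.elLe t tmax) ∧
            (∀ i : N6, CL.opX P' i ((Pi.single tmax 1 : L6ab a b → ℂ)) = 0) ∧
            CL.opH m1 ((Pi.single tmax 1 : L6ab a b → ℂ)) = (a : ℂ) • (Pi.single tmax 1 : L6ab a b → ℂ) ∧
            CL.opH m6 ((Pi.single tmax 1 : L6ab a b → ℂ)) = (b : ℂ) • (Pi.single tmax 1 : L6ab a b → ℂ) ∧
            (∀ j : N6, j ≠ m1 → j ≠ m6 → CL.opH j ((Pi.single tmax 1 : L6ab a b → ℂ)) = 0) := by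
  obtain ⟨β, hβ⟩ := HeapE7.exists_isInterlacing
  have hΦ : ColoredHeap.RespectsEdges (HeapE7.labellingEquiv a b) :=
    HeapE7.respectsEdges_labellingEquiv
  refine ⟨ColoredHeap.squaredCoeff (HeapE7.labellingEquiv a b),
    fun r s ⟨i, hi⟩ => ColoredHeap.squaredCoeff_pos hΦ hβ hi,
    ColoredHeap.exists_lieHom_gLie hΦ hβ HeapE7.A6_eq, fun P hP φ hφ => ⟨fun U hU => ?_,
    HeapE7.top a b, HeapE7.elLe_top, fun i => ?_, ?_, ?_, fun j hj1 hj6 => ?_⟩⟩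
  · exact ColoredHeap.eq_bot_or_eq_top_of_invariant HeapE7.isHighest_highest hΦ hP
      (fun i v hv => (hφ i).1 ▸ hU _ v hv) fun i v hv => (hφ i).2.1 ▸ hU _ v hv
  · exact ColoredHeap.opX_highest HeapE7.isHighest_highest hΦ HeapE7.labellingEquiv_top i
  · simp [HeapE7.opH_top]
  · simp [HeapE7.opH_top]
  · simp [HeapE7.opH_top, hj1, hj6]

end
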